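/- Let τ₀ < τ be real numbers, let α, β : [τ₀, τ] → ℝ be Lipschitz continuous, let σ : [τ₀, τ] × ℝ → ℝ be bounded and Lipschitz continuous with σ(t,x)² ≥ λ₀ for all (t,x) and some constant λ₀ > 0, and let φ : ℝ → ℝ be continuous with |φ(x)| ≤ C̄·exp(c̄|x|) for some constants C̄, c̄ > 0. Then there exists a function f : [τ₀, τ] × ℝ → ℝ which is continuous on [τ₀, τ] × ℝ, of class C^{1,2} on [τ₀, τ) × ℝ, satisfies ∂ₜf(t,x) + (α(t) + β(t)x)·∂ₓf(t,x) + (1/2)·σ(t,x)²·∂²ₓₓf(t,x) − x·f(t,x) = 0 for all (t,x) ∈ [τ₀, τ) × ℝ, satisfies f(τ, x) = φ(x) for all x ∈ ℝ, and satisfies |f(t,x)| ≤ K̄·exp(k|x|) for all (t,x) ∈ [τ₀, τ] × ℝ and some constants K̄, k > 0. -/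

import Mathlib

/-- `f` is of class `C^{1,2}` on `I × ℝ`: it is jointly continuous there, once
continuously differentiable in the time variable and twice continuously
differentiable in the space variable. -/
def C12On (f : ℝ → ℝ → ℝ) (I : Set ℝ) : Prop :=
  ContinuousOn (fun p : ℝ × ℝ => f p.1 p.2) (I ×ˢ (Set.univ : Set ℝ)) ∧
  (∀ x : ℝ, ∀ t ∈ I, DifferentiableAt ℝ (fun s => f s x) t) ∧
  (∀ t ∈ I, ContDiff ℝ 2 (fun x => f t x)) ∧
  ContinuousOn (fun p : ℝ × ℝ => deriv (fun s => f s p.2) p.1) (I ×ˢ (Set.univ : Set ℝ)) ∧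
  ContinuousOn (fun p : ℝ × ℝ => deriv (fun x => f p.1 x) p.2) (I ×ˢ (Set.univ : Set ℝ)) ∧
  ContinuousOn (fun p : ℝ × ℝ => deriv (deriv (fun x => f p.1 x)) p.2) (I ×ˢ (Set.univ : Set ℝ))

section
open MeasureTheory Set Filter Topology

/-- Spatial derivatives of the Gaussian density of variance `v`. -/
noncomputable def gk : ℕ → ℝ → ℝ → ℝ
  | 0, v, x => (√(2 * Real.pi * v))⁻¹ * Real.exp (-x ^ 2 / (2 * v))
  | 1, v, x => -(x / v) * ((√(2 * Real.pi * v))⁻¹ * Real.exp (-x ^ 2 / (2 * v)))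
  | (j + 2), v, x => -(x / v) * gk (j + 1) v x - ((j + 1 : ℝ) / v) * gk j v x

lemma gk_one (v x : ℝ) : gk 1 v x = -(x / v) * gk 0 v x := by simp [gk]

lemma gk_succ (j : ℕ) (v x : ℝ) :
    gk (j + 2) v x = -(x / v) * gk (j + 1) v x - ((j + 1 : ℝ) / v) * gk j v x := by
  rw [gk]

lemma gk_hasDerivAt_x (j : ℕ) (v x : ℝ) (hv : 0 < v) :
    HasDerivAt (fun x => gk j v x) (gk (j + 1) v x) x := by
  have h0 : ∀ x, HasDerivAt (fun x => gk 0 v x) (gk 1 v x) x := by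
    intro x
    have h := (((hasDerivAt_pow 2 x).neg.div_const (2 * v)).exp).const_mul (√(2 * Real.pi * v))⁻¹
    refine h.congr_deriv ?_
    simp only [gk, Pi.neg_apply]
    push_cast
    field_simp
  have key : ∀ j : ℕ, (∀ x, HasDerivAt (fun x => gk j v x) (gk (j + 1) v x) x) ∧
      (∀ x, HasDerivAt (fun x => gk (j + 1) v x) (gk (j + 2) v x) x) := by
    intro j
    induction j with
    | zero =>
      refine ⟨h0, fun x => ?_⟩
      have h := (((hasDerivAt_id x).div_const v).neg).mul (h0 x)
      have e : (fun x => gk (0 + 1) v x) = fun x => -(x / v) * gk 0 v x := by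
        funext x; exact gk_one v x
      rw [e]
      refine h.congr_deriv ?_
      rw [gk_succ]
      simp
      ring
    | succ j ih =>
      refine ⟨ih.2, fun x => ?_⟩
      have h := ((((hasDerivAt_id x).div_const v).neg).mul (ih.2 x)).sub
        ((ih.1 x).const_mul ((j + 1 : ℝ) / v))
      have e : (fun x => gk (j + 1 + 1) v x) =
          fun x => -(x / v) * gk (j + 1) v x - ((j + 1 : ℝ) / v) * gk j v x := by
        funext x; exact gk_succ j v x
      rw [e]
      refine h.congr_deriv ?_
      rw [gk_succ (j + 1)]
      simp
      ring
  exact (key j).1 x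

lemma gk_hasDerivAt_v (j : ℕ) (v x : ℝ) (hv : 0 < v) :
    HasDerivAt (fun v => gk j v x) (1 / 2 * gk (j + 2) v x) v := by
  have hpi := Real.pi_pos
  have h0 : ∀ v, 0 < v → HasDerivAt (fun v => gk 0 v x) (1 / 2 * gk 2 v x) v := by
    intro v hv
    have hs : 0 < √(2 * Real.pi * v) := Real.sqrt_pos.mpr (by positivity)
    have h1 := (((hasDerivAt_id v).const_mul (2 * Real.pi)).sqrt
      (by simp [hpi.ne', hv.ne'])).inv (by simpa using hs.ne')
    have h2 := ((((hasDerivAt_id v).const_mul 2).inv (by simpa using hv.ne')).const_mul (-x ^ 2)).exp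
    have h := h1.mul h2
    refine h.congr_deriv ?_
    rw [gk_succ, gk_one]
    simp only [gk]
    simp only [id, mul_one, Nat.cast_zero, div_eq_mul_inv, Pi.inv_apply]
    have hsq : √(2 * Real.pi * v) ^ 2 = 2 * Real.pi * v := Real.sq_sqrt (by positivity)
    generalize √(2 * Real.pi * v) = r at *
    have hv' : v = r ^ 2 / (2 * Real.pi) := by field_simp; linarith
    subst hv'
    simp
    field_simp
    ring
  have key : ∀ j : ℕ, (∀ v, 0 < v → HasDerivAt (fun v => gk j v x) (1 / 2 * gk (j + 2) v x) v) ∧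
      (∀ v, 0 < v → HasDerivAt (fun v => gk (j + 1) v x) (1 / 2 * gk (j + 3) v x) v) := by
    intro j
    induction j with
    | zero =>
      refine ⟨h0, fun v hv => ?_⟩
      have h := ((((hasDerivAt_id v).inv hv.ne').const_mul x).neg).mul (h0 v hv)
      have e : (fun v => gk (0 + 1) v x) = fun v => -(x * v⁻¹) * gk 0 v x := by
        funext v; rw [← div_eq_mul_inv]; exact gk_one v x
      rw [e]
      refine h.congr_deriv ?_
      rw [gk_succ 1]
      simp only [gk_one, Pi.inv_apply, Pi.neg_apply, id]
      push_cast
      field_simp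
      ring
    | succ j ih =>
      refine ⟨ih.2, fun v hv => ?_⟩
      have h := (((((hasDerivAt_id v).inv hv.ne').const_mul x).neg).mul (ih.2 v hv)).sub
        ((((hasDerivAt_id v).inv hv.ne').const_mul (j + 1 : ℝ)).mul (ih.1 v hv))
      have e : (fun v => gk (j + 1 + 1) v x) =
          fun v => -(x * v⁻¹) * gk (j + 1) v x - ((j + 1 : ℝ) * v⁻¹) * gk j v x := by
        funext v; rw [← div_eq_mul_inv, ← div_eq_mul_inv]; exact gk_succ j v x
      rw [e]
      refine h.congr_deriv ?_
      rw [gk_succ (j + 2), gk_succ (j + 1), gk_succ j]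
      simp only [Pi.inv_apply, Pi.neg_apply, id]
      push_cast
      field_simp
      ring
  exact (key j).1 v hv

lemma gk_continuousAt (j : ℕ) (p : ℝ × ℝ) (hv : 0 < p.1) :
    ContinuousAt (fun p : ℝ × ℝ => gk j p.1 p.2) p := by
  have h0 : ContinuousAt (fun p : ℝ × ℝ => gk 0 p.1 p.2) p := by
    have hs : √(2 * Real.pi * p.1) ≠ 0 :=
      (Real.sqrt_pos.mpr (by have := Real.pi_pos; positivity)).ne'
    simp only [gk]
    have h2 : 2 * p.1 ≠ 0 := by positivity
    fun_prop (disch := assumption)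
  have key : ∀ j : ℕ, (ContinuousAt (fun p : ℝ × ℝ => gk j p.1 p.2) p) ∧
      (ContinuousAt (fun p : ℝ × ℝ => gk (j + 1) p.1 p.2) p) := by
    intro j
    have hne : p.1 ≠ 0 := hv.ne'
    induction j with
    | zero =>
      refine ⟨h0, ?_⟩
      simp only [zero_add, gk_one]
      fun_prop (disch := assumption)
    | succ j ih =>
      refine ⟨ih.2, ?_⟩
      have h1 := ih.1
      have h2 := ih.2
      simp only [gk_succ]
      fun_prop (disch := assumption)
  exact (key j).1

/-- Majorant. -/
noncomputable def Hk (Lam δ x : ℝ) : ℝ := δ⁻¹ * Real.exp (-x ^ 2 / (4 * Lam * δ ^ 2))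

lemma Hk_nonneg {Lam δ : ℝ} (x : ℝ) (hδ : 0 < δ) : 0 ≤ Hk Lam δ x := by unfold Hk; positivity

lemma Hk_eq (Lam δ x : ℝ) : Hk Lam δ x = δ⁻¹ * Real.exp (-(1 / (4 * Lam * δ ^ 2)) * x ^ 2) := by
  unfold Hk; congr 2; ring

lemma Hk_integrable {Lam δ : ℝ} (x : ℝ) (hL : 0 < Lam) (hδ : 0 < δ) :
    Integrable (fun y => Hk Lam δ (x - y)) := by
  have h : Integrable (fun y => Hk Lam δ y) := by
    simp only [Hk_eq]
    exact (integrable_exp_neg_mul_sq (by positivity)).const_mul _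
  exact h.comp_sub_left x

lemma Hk_integral {Lam δ : ℝ} (x : ℝ) (hL : 0 < Lam) (hδ : 0 < δ) :
    ∫ y, Hk Lam δ (x - y) = √(4 * Real.pi * Lam) := by
  rw [integral_sub_left_eq_self (fun y => Hk Lam δ y) volume x]
  simp only [Hk_eq]
  rw [integral_const_mul, integral_gaussian]
  have : Real.pi / (1 / (4 * Lam * δ ^ 2)) = (4 * Real.pi * Lam) * δ ^ 2 := by field_simp
  rw [this, Real.sqrt_mul (by have := Real.pi_pos; positivity), Real.sqrt_sq hδ.le]
  field_simp

lemma gk0_bound (lam Lam : ℝ) (hlam : 0 < lam) (hL : 0 < Lam) (n : ℕ) :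
    ∃ C : ℝ, 0 ≤ C ∧ ∀ δ v x : ℝ, 0 < δ → lam * δ ^ 2 ≤ v → v ≤ Lam * δ ^ 2 →
      |x| ^ n * |gk 0 v x| ≤ C * (δ ^ n * Hk Lam δ x) := by
  have hpi := Real.pi_pos
  refine ⟨n.factorial * Real.exp Lam * (√(2 * Real.pi * lam))⁻¹, by positivity, ?_⟩
  intro δ v x hδ h1 h2
  have hv : 0 < v := lt_of_lt_of_le (by positivity) h1
  have hs1 : √(2 * Real.pi * lam) * δ ≤ √(2 * Real.pi * v) := by
    rw [← Real.sqrt_sq hδ.le, ← Real.sqrt_mul (by positivity)]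
    apply Real.sqrt_le_sqrt
    nlinarith
  have hs2 : 0 < √(2 * Real.pi * lam) * δ := by positivity
  have hi : (√(2 * Real.pi * v))⁻¹ ≤ (√(2 * Real.pi * lam))⁻¹ * δ⁻¹ := by
    rw [← mul_inv]; exact inv_anti₀ hs2 hs1
  have he : Real.exp (-x ^ 2 / (2 * v)) ≤ Real.exp (-x ^ 2 / (2 * (Lam * δ ^ 2))) := by
    apply Real.exp_le_exp.mpr
    rw [neg_div, neg_div]
    apply neg_le_neg
    gcongr
  have hq : |x| ^ n ≤ δ ^ n * (n.factorial * Real.exp Lam *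
      Real.exp (x ^ 2 / (4 * Lam * δ ^ 2))) := by
    have h3 := Real.pow_div_factorial_le_exp (|x| / δ) (by positivity) n
    have h4 : |x| / δ ≤ Lam + x ^ 2 / (4 * Lam * δ ^ 2) := by
      have : x ^ 2 / (4 * Lam * δ ^ 2) = (|x| / δ) ^ 2 / (4 * Lam) := by
        rw [div_pow, sq_abs]; field_simp
      rw [this]
      generalize |x| / δ = q
      rw [← sub_nonneg]
      have : Lam + q ^ 2 / (4 * Lam) - q = (2 * Lam - q) ^ 2 / (4 * Lam) := by field_simp; ring
      rw [this]; positivity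
    have h5 : (|x| / δ) ^ n ≤ n.factorial * (Real.exp Lam * Real.exp (x ^ 2 / (4 * Lam * δ ^ 2))) := by
      rw [← Real.exp_add]
      rw [div_le_iff₀ (by positivity)] at h3
      calc _ ≤ _ := h3
        _ ≤ Real.exp (Lam + x ^ 2 / (4 * Lam * δ ^ 2)) * n.factorial := by gcongr
        _ = _ := by ring
    rw [div_pow, div_le_iff₀ (by positivity)] at h5
    linarith
  have hg : |gk 0 v x| ≤ (√(2 * Real.pi * lam))⁻¹ * δ⁻¹ * Real.exp (-x ^ 2 / (2 * (Lam * δ ^ 2))) := by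
    simp only [gk]
    rw [abs_of_nonneg (by positivity)]
    gcongr
  have hee : Real.exp (x ^ 2 / (4 * Lam * δ ^ 2)) * Real.exp (-x ^ 2 / (2 * (Lam * δ ^ 2))) =
      Real.exp (-x ^ 2 / (4 * Lam * δ ^ 2)) := by
    rw [← Real.exp_add]; congr 1; field_simp; ring
  calc |x| ^ n * |gk 0 v x| ≤ (δ ^ n * (n.factorial * Real.exp Lam *
      Real.exp (x ^ 2 / (4 * Lam * δ ^ 2)))) * ((√(2 * Real.pi * lam))⁻¹ * δ⁻¹ *
        Real.exp (-x ^ 2 / (2 * (Lam * δ ^ 2)))) := by gcongr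
    _ = _ := by unfold Hk; rw [← hee]; ring

lemma gk_bound (lam Lam : ℝ) (hlam : 0 < lam) (hL : 0 < Lam) (j : ℕ) : ∀ n : ℕ,
    ∃ C : ℝ, 0 ≤ C ∧ ∀ δ v x : ℝ, 0 < δ → lam * δ ^ 2 ≤ v → v ≤ Lam * δ ^ 2 →
      |x| ^ n * |gk j v x| ≤ C * (δ ^ n / δ ^ j * Hk Lam δ x) := by
  have key : ∀ j : ℕ, (∀ n : ℕ,
    ∃ C : ℝ, 0 ≤ C ∧ ∀ δ v x : ℝ, 0 < δ → lam * δ ^ 2 ≤ v → v ≤ Lam * δ ^ 2 →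
      |x| ^ n * |gk j v x| ≤ C * (δ ^ n / δ ^ j * Hk Lam δ x)) ∧ (∀ n : ℕ,
    ∃ C : ℝ, 0 ≤ C ∧ ∀ δ v x : ℝ, 0 < δ → lam * δ ^ 2 ≤ v → v ≤ Lam * δ ^ 2 →
      |x| ^ n * |gk (j + 1) v x| ≤ C * (δ ^ n / δ ^ (j + 1) * Hk Lam δ x)) := by
    intro j
    induction j with
    | zero =>
      constructor
      · intro n
        obtain ⟨C, hC, h⟩ := gk0_bound lam Lam hlam hL n
        refine ⟨C, hC, fun δ v x hδ h1 h2 => ?_⟩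
        simpa using h δ v x hδ h1 h2
      · intro n
        obtain ⟨C, hC, h⟩ := gk0_bound lam Lam hlam hL (n + 1)
        refine ⟨C / lam, by positivity, fun δ v x hδ h1 h2 => ?_⟩
        have h3 := h δ v x hδ h1 h2
        have hv : 0 < v := lt_of_lt_of_le (by positivity) h1
        rw [zero_add, gk_one, abs_mul, abs_neg, abs_div, abs_of_pos hv]
        have hH := Hk_nonneg (Lam := Lam) x hδ
        calc |x| ^ n * (|x| / v * |gk 0 v x|) = (|x| ^ (n + 1) * |gk 0 v x|) / v := by
              rw [pow_succ]; ring
          _ ≤ (C * (δ ^ (n + 1) * Hk Lam δ x)) / (lam * δ ^ 2) := by gcongr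
          _ = _ := by field_simp; ring
    | succ j ih =>
      refine ⟨ih.2, fun n => ?_⟩
      obtain ⟨C1, hC1, H1⟩ := ih.2 (n + 1)
      obtain ⟨C2, hC2, H2⟩ := ih.1 n
      refine ⟨C1 / lam + (j + 1) * C2 / lam, by positivity, fun δ v x hδ h1 h2 => ?_⟩
      have h3 := H1 δ v x hδ h1 h2
      have h4 := H2 δ v x hδ h1 h2
      have hv : 0 < v := lt_of_lt_of_le (by positivity) h1
      have hH := Hk_nonneg (Lam := Lam) x hδ
      rw [gk_succ]
      have h5 : |-(x / v) * gk (j + 1) v x - (j + 1 : ℝ) / v * gk j v x| ≤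
          |x| / v * |gk (j + 1) v x| + (j + 1 : ℝ) / v * |gk j v x| := by
        refine (abs_sub _ _).trans (le_of_eq ?_)
        rw [abs_mul, abs_mul, abs_neg, abs_div, abs_of_pos hv,
          abs_of_nonneg (by positivity : (0 : ℝ) ≤ (j + 1 : ℝ) / v)]
      calc |x| ^ n * |-(x / v) * gk (j + 1) v x - (j + 1 : ℝ) / v * gk j v x|
          ≤ |x| ^ n * (|x| / v * |gk (j + 1) v x| + (j + 1 : ℝ) / v * |gk j v x|) := by gcongr
        _ = (|x| ^ (n + 1) * |gk (j + 1) v x|) / v + (j + 1 : ℝ) * (|x| ^ n * |gk j v x|) / v := by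
              rw [pow_succ]; ring
        _ ≤ (C1 * (δ ^ (n + 1) / δ ^ (j + 1) * Hk Lam δ x)) / (lam * δ ^ 2) +
            (j + 1 : ℝ) * (C2 * (δ ^ n / δ ^ j * Hk Lam δ x)) / (lam * δ ^ 2) := by gcongr
        _ = _ := by field_simp; ring
  exact (key j).1
end

section
open MeasureTheory Set Filter Topology

/-- Coefficients of a uniformly parabolic operator `½ a ∂ₓₓ + b ∂ₓ + c`. -/
structure Coef where
  a : ℝ → ℝ → ℝ
  b : ℝ → ℝ → ℝ
  c : ℝ → ℝ → ℝ
  lam : ℝ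
  Lam : ℝ
  L : ℝ
  lam_pos : 0 < lam
  Lam_pos : 0 < Lam
  L_pos : 0 < L
  ca : Continuous (fun p : ℝ × ℝ => a p.1 p.2)
  cb : Continuous (fun p : ℝ × ℝ => b p.1 p.2)
  cc : Continuous (fun p : ℝ × ℝ => c p.1 p.2)
  a_lb : ∀ t x, lam ≤ a t x
  a_ub : ∀ t x, a t x ≤ Lam
  b_bd : ∀ t x, |b t x| ≤ Lam
  c_bd : ∀ t x, |c t x| ≤ Lam
  a_lip : ∀ t x y, |a t x - a t y| ≤ L * |x - y|
  b_lip : ∀ t x y, |b t x - b t y| ≤ L * |x - y|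
  c_lip : ∀ t x y, |c t x - c t y| ≤ L * |x - y|

namespace Coef
variable (S : Coef)

lemma ca_t (y : ℝ) : Continuous (fun t => S.a t y) :=
  S.ca.comp (Continuous.prodMk continuous_id continuous_const)

lemma ca_x (t : ℝ) : Continuous (fun y => S.a t y) :=
  S.ca.comp (Continuous.prodMk continuous_const continuous_id)

/-- integrated variance -/
noncomputable def A (t s y : ℝ) : ℝ := ∫ r in s..t, S.a r y

lemma A_lower {t s : ℝ} (h : s ≤ t) (y : ℝ) : S.lam * (t - s) ≤ S.A t s y := by
  have h1 := intervalIntegral.integral_mono_on (μ := volume) h (intervalIntegrable_const (c := S.lam))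
    ((S.ca_t y).intervalIntegrable s t) (fun r _ => S.a_lb r y)
  simp only [intervalIntegral.integral_const, smul_eq_mul] at h1
  unfold A; linarith

lemma A_upper {t s : ℝ} (h : s ≤ t) (y : ℝ) : S.A t s y ≤ S.Lam * (t - s) := by
  have h1 := intervalIntegral.integral_mono_on (μ := volume) h ((S.ca_t y).intervalIntegrable s t)
    (intervalIntegrable_const (c := S.Lam)) (fun r _ => S.a_ub r y)
  simp only [intervalIntegral.integral_const, smul_eq_mul] at h1
  unfold A; linarith

lemma A_pos {t s : ℝ} (h : s < t) (y : ℝ) : 0 < S.A t s y :=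
  lt_of_lt_of_le (mul_pos S.lam_pos (sub_pos.mpr h)) (S.A_lower h.le y)

lemma A_lip {t s : ℝ} (h : s ≤ t) (y y' : ℝ) :
    |S.A t s y - S.A t s y'| ≤ S.L * |y - y'| * (t - s) := by
  unfold A
  rw [← intervalIntegral.integral_sub ((S.ca_t y).intervalIntegrable s t)
    ((S.ca_t y').intervalIntegrable s t)]
  have := intervalIntegral.norm_integral_le_of_norm_le_const (a := s) (b := t)
    (f := fun r => S.a r y - S.a r y') (C := S.L * |y - y'|) (fun r _ => S.a_lip r y y')
  rwa [abs_of_nonneg (sub_nonneg.mpr h)] at this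

lemma A_deriv (t s y : ℝ) : HasDerivAt (fun t => S.A t s y) (S.a t y) t := by
  unfold A
  exact intervalIntegral.integral_hasDerivAt_right ((S.ca_t y).intervalIntegrable s t)
    ((S.ca_t y).stronglyMeasurableAtFilter _ _) (S.ca_t y).continuousAt

lemma A_cont : Continuous (fun p : ℝ × ℝ × ℝ => S.A p.1 p.2.1 p.2.2) := by
  have e : (fun p : ℝ × ℝ × ℝ => S.A p.1 p.2.1 p.2.2) = fun p =>
      (∫ r in (0:ℝ)..p.1, S.a r p.2.2) - ∫ r in (0:ℝ)..p.2.1, S.a r p.2.2 := by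
    funext p
    unfold A
    rw [intervalIntegral.integral_interval_sub_left ((S.ca_t _).intervalIntegrable _ _)
      ((S.ca_t _).intervalIntegrable _ _)]
  rw [e]
  have hc : Continuous (Function.uncurry (fun (p : ℝ × ℝ × ℝ) (r : ℝ) => S.a r p.2.2)) := by
    exact S.ca.comp (by fun_prop : Continuous (fun q : (ℝ × ℝ × ℝ) × ℝ => (q.2, q.1.2.2)))
  exact (intervalIntegral.continuous_parametric_intervalIntegral_of_continuous hc
    (by fun_prop : Continuous (fun p : ℝ × ℝ × ℝ => p.1))).sub
    (intervalIntegral.continuous_parametric_intervalIntegral_of_continuous hc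
    (by fun_prop : Continuous (fun p : ℝ × ℝ × ℝ => p.2.1)))

/-- frozen Gaussian kernel and its spatial derivatives -/
noncomputable def Z (j : ℕ) (t s x y : ℝ) : ℝ := gk j (S.A t s y) (x - y)

/-- integral operators -/
noncomputable def J (j : ℕ) (t s : ℝ) (ψ : ℝ → ℝ) (x : ℝ) : ℝ := ∫ y, S.Z j t s x y * ψ y

lemma Z_bound (n j : ℕ) : ∃ C : ℝ, 0 ≤ C ∧ ∀ t s x y : ℝ, s < t →
    |x - y| ^ n * |S.Z j t s x y| ≤
      C * (√(t - s) ^ n / √(t - s) ^ j * Hk S.Lam (√(t - s)) (x - y)) := by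
  obtain ⟨C, hC, h⟩ := gk_bound S.lam S.Lam S.lam_pos S.Lam_pos j n
  refine ⟨C, hC, fun t s x y hst => ?_⟩
  have hpos : 0 < t - s := sub_pos.mpr hst
  refine h _ _ _ (Real.sqrt_pos.mpr hpos) ?_ ?_
  · rw [Real.sq_sqrt hpos.le]; exact S.A_lower hst.le y
  · rw [Real.sq_sqrt hpos.le]; exact S.A_upper hst.le y

lemma Z_continuousAt (j : ℕ) (t s x y : ℝ) (h : s < t) :
    ContinuousAt (fun p : ℝ × ℝ × ℝ × ℝ => S.Z j p.1 p.2.1 p.2.2.1 p.2.2.2) (t, s, x, y) := by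
  have h1 : Continuous (fun p : ℝ × ℝ × ℝ × ℝ =>
      ((S.A p.1 p.2.1 p.2.2.2, p.2.2.1 - p.2.2.2) : ℝ × ℝ)) := by
    refine Continuous.prodMk (S.A_cont.comp (by fun_prop :
      Continuous (fun p : ℝ × ℝ × ℝ × ℝ => (p.1, p.2.1, p.2.2.2)))) (by fun_prop)
  have h2 : ContinuousAt (fun p : ℝ × ℝ => gk j p.1 p.2) (S.A t s y, x - y) :=
    gk_continuousAt j _ (S.A_pos h y)
  exact ContinuousAt.comp (f := fun p : ℝ × ℝ × ℝ × ℝ =>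
      ((S.A p.1 p.2.1 p.2.2.2, p.2.2.1 - p.2.2.2) : ℝ × ℝ)) (x := (t, s, x, y)) h2 h1.continuousAt

lemma Z_cont_y (j : ℕ) (t s x : ℝ) (h : s < t) : Continuous (fun y => S.Z j t s x y) := by
  rw [continuous_iff_continuousAt]
  intro y
  exact ContinuousAt.comp (f := fun y : ℝ => ((t, s, x, y) : ℝ × ℝ × ℝ × ℝ)) (x := y)
    (S.Z_continuousAt j t s x y h) (by fun_prop)

lemma Hk_loc {Lam δ δ0 x x0 : ℝ} (hL : 0 < Lam) (hδ0 : 0 < δ0) (h1 : δ0 / 2 ≤ δ) (h2 : δ ≤ 2 * δ0)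
    (hx : |x - x0| ≤ 1) (y : ℝ) :
    Hk Lam δ (x - y) ≤ (δ0 / 2)⁻¹ * (Real.exp (1 / (16 * Lam * δ0 ^ 2)) *
      Real.exp (-(1 / (32 * Lam * δ0 ^ 2)) * (x0 - y) ^ 2)) := by
  unfold Hk
  have hδ : 0 < δ := lt_of_lt_of_le (by positivity) h1
  have h3 : δ⁻¹ ≤ (δ0 / 2)⁻¹ := inv_anti₀ (by positivity) h1
  have h4 : -(x - y) ^ 2 / (4 * Lam * δ ^ 2) ≤ 1 / (16 * Lam * δ0 ^ 2) +
      -(1 / (32 * Lam * δ0 ^ 2)) * (x0 - y) ^ 2 := by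
    have h5 : -(x - y) ^ 2 / (4 * Lam * δ ^ 2) ≤ -(x - y) ^ 2 / (4 * Lam * (2 * δ0) ^ 2) := by
      rw [neg_div, neg_div]; apply neg_le_neg; gcongr
    refine h5.trans ?_
    have h6 : (x0 - y) ^ 2 ≤ 2 * (x - y) ^ 2 + 2 := by
      have : (x - x0) ^ 2 ≤ 1 := by rw [← sq_abs]; nlinarith [abs_nonneg (x - x0)]
      nlinarith [sq_nonneg ((x - y) + (x - x0))]
    have h7 : 1 / (16 * Lam * δ0 ^ 2) + -(1 / (32 * Lam * δ0 ^ 2)) * (x0 - y) ^ 2 -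
      -(x - y) ^ 2 / (4 * Lam * (2 * δ0) ^ 2) =
      (2 * (x - y) ^ 2 + 2 - (x0 - y) ^ 2) / (32 * Lam * δ0 ^ 2) := by field_simp; ring
    rw [← sub_nonneg, h7]
    apply div_nonneg (by linarith) (by positivity)
  rw [← Real.exp_add]
  gcongr

lemma Z_dom (j : ℕ) (t0 s0 x0 : ℝ) (h : s0 < t0) : ∃ B : ℝ → ℝ, Integrable B ∧ (∀ y, 0 ≤ B y) ∧
    ∀ᶠ p : ℝ × ℝ × ℝ in 𝓝 (t0, s0, x0), p.2.1 < p.1 ∧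
      ∀ y, |S.Z j p.1 p.2.1 p.2.2 y| ≤ B y := by
  obtain ⟨C, hC, hZ⟩ := S.Z_bound 0 j
  set d := t0 - s0 with hd
  have hdpos : 0 < d := sub_pos.mpr h
  set δ0 := √d with hδ0
  have hδ0pos : 0 < δ0 := Real.sqrt_pos.mpr hdpos
  have hLam := S.Lam_pos
  refine ⟨fun y => C * (1 / (δ0 / 2) ^ j * ((δ0 / 2)⁻¹ * (Real.exp (1 / (16 * S.Lam * δ0 ^ 2)) *
      Real.exp (-(1 / (32 * S.Lam * δ0 ^ 2)) * (x0 - y) ^ 2)))), ?_, fun y => by positivity, ?_⟩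
  · refine Integrable.const_mul (Integrable.const_mul (Integrable.const_mul
      (Integrable.const_mul ?_ _) _) _) _
    exact (integrable_exp_neg_mul_sq (b := 1 / (32 * S.Lam * δ0 ^ 2))
      (by positivity)).comp_sub_left x0
  · have e1 : ∀ᶠ p : ℝ × ℝ × ℝ in 𝓝 (t0, s0, x0), d / 4 < p.1 - p.2.1 :=
      (ContinuousAt.eventually_lt continuousAt_const (by fun_prop) (by simp; linarith))
    have e2 : ∀ᶠ p : ℝ × ℝ × ℝ in 𝓝 (t0, s0, x0), p.1 - p.2.1 < 4 * d :=
      (ContinuousAt.eventually_lt (by fun_prop) continuousAt_const (by simp; linarith))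
    have e3 : ∀ᶠ p : ℝ × ℝ × ℝ in 𝓝 (t0, s0, x0), |p.2.2 - x0| < 1 :=
      (ContinuousAt.eventually_lt (by fun_prop) continuousAt_const (by simp))
    filter_upwards [e1, e2, e3] with p h1 h2 h3
    have hlt : p.2.1 < p.1 := by linarith
    refine ⟨hlt, fun y => ?_⟩
    have hb := hZ p.1 p.2.1 p.2.2 y hlt
    simp only [pow_zero, one_mul] at hb
    have hl : δ0 / 2 ≤ √(p.1 - p.2.1) := by
      apply Real.le_sqrt_of_sq_le
      rw [div_pow, Real.sq_sqrt hdpos.le]; linarith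
    have hu : √(p.1 - p.2.1) ≤ 2 * δ0 := by
      rw [Real.sqrt_le_left (by positivity), mul_pow, Real.sq_sqrt hdpos.le]; linarith
    have := Hk_loc (x := p.2.2) hLam hδ0pos hl hu h3.le y
    have hn : 0 ≤ Hk S.Lam √(p.1 - p.2.1) (p.2.2 - y) := Hk_nonneg _ (by linarith [hl])
    refine hb.trans ?_
    gcongr

lemma Z_dom' (j : ℕ) (t s x : ℝ) (h : s < t) : ∃ B : ℝ → ℝ, Integrable B ∧ (∀ y, 0 ≤ B y) ∧
      ∀ y, |S.Z j t s x y| ≤ B y := by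
  obtain ⟨B, h1, h2, h3⟩ := S.Z_dom j t s x h
  exact ⟨B, h1, h2, (h3.self_of_nhds).2⟩

lemma Z_integrable (j : ℕ) (t s x : ℝ) (h : s < t) {ψ : ℝ → ℝ} (hψ : Continuous ψ) {m : ℝ}
    (hm : ∀ y, |ψ y| ≤ m) : Integrable (fun y => S.Z j t s x y * ψ y) := by
  obtain ⟨B, h1, h2, h3⟩ := S.Z_dom' j t s x h
  refine (h1.mul_const m).mono' ((S.Z_cont_y j t s x h).mul hψ).aestronglyMeasurable
    (Eventually.of_forall fun y => ?_)
  rw [norm_mul]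
  exact mul_le_mul (h3 y) (hm y) (norm_nonneg _) (h2 y)

lemma J_bound (j : ℕ) : ∃ C : ℝ, 0 ≤ C ∧ ∀ (t s x m0 m1 : ℝ) (ψ : ℝ → ℝ), s < t →
    (∀ y, |ψ y| ≤ m0 + m1 * |x - y|) → 0 ≤ m0 → 0 ≤ m1 →
    |S.J j t s ψ x| ≤ C * ((m0 + m1 * √(t - s)) / √(t - s) ^ j) := by
  obtain ⟨C0, hC0, h0⟩ := S.Z_bound 0 j
  obtain ⟨C1, hC1, h1⟩ := S.Z_bound 1 j
  refine ⟨(C0 + C1) * √(4 * Real.pi * S.Lam), by positivity, ?_⟩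
  intro t s x m0 m1 ψ hst hψ hm0 hm1
  have hδ : 0 < √(t - s) := Real.sqrt_pos.mpr (sub_pos.mpr hst)
  set δ := √(t - s)
  have hb : ∀ y, ‖S.Z j t s x y * ψ y‖ ≤
      ((C0 * m0 + C1 * m1 * δ) / δ ^ j) * Hk S.Lam δ (x - y) := by
    intro y
    rw [norm_mul, Real.norm_eq_abs, Real.norm_eq_abs]
    have k0 := h0 t s x y hst
    have k1 := h1 t s x y hst
    simp only [pow_zero, one_mul, pow_one] at k0 k1
    calc |S.Z j t s x y| * |ψ y| ≤ |S.Z j t s x y| * (m0 + m1 * |x - y|) := by gcongr; exact hψ y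
      _ = m0 * |S.Z j t s x y| + m1 * (|x - y| * |S.Z j t s x y|) := by ring
      _ ≤ m0 * (C0 * (1 / δ ^ j * Hk S.Lam δ (x - y))) +
          m1 * (C1 * (δ / δ ^ j * Hk S.Lam δ (x - y))) := by gcongr
      _ = _ := by ring
  have := norm_integral_le_of_norm_le ((Hk_integrable x S.Lam_pos hδ).const_mul _)
    (Eventually.of_forall hb)
  rw [integral_const_mul, Hk_integral x S.Lam_pos hδ] at this
  refine this.trans ?_
  have : C0 * m0 + C1 * m1 * δ ≤ (C0 + C1) * (m0 + m1 * δ) := by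
    have := mul_nonneg hC1 hm0
    have := mul_nonneg hC0 (mul_nonneg hm1 hδ.le)
    nlinarith
  calc _ ≤ ((C0 + C1) * (m0 + m1 * δ)) / δ ^ j * √(4 * Real.pi * S.Lam) := by gcongr
    _ = _ := by ring

lemma J_cont (j : ℕ) {X : Type*} [TopologicalSpace X] [FirstCountableTopology X] {p0 : X}
    {t s x : X → ℝ} {Ψ : X → ℝ → ℝ} {m : ℝ}
    (ht : ContinuousAt t p0) (hs : ContinuousAt s p0) (hx : ContinuousAt x p0)
    (hst : s p0 < t p0) (hm : ∀ᶠ p in 𝓝 p0, ∀ y, |Ψ p y| ≤ m)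
    (hc : ∀ᶠ p in 𝓝 p0, Continuous (Ψ p)) (hΨ : ∀ y, ContinuousAt (fun p => Ψ p y) p0) :
    ContinuousAt (fun p => S.J j (t p) (s p) (Ψ p) (x p)) p0 := by
  obtain ⟨B, h1, h2, h3⟩ := S.Z_dom j (t p0) (s p0) (x p0) hst
  have hmap : Tendsto (fun p => (t p, s p, x p)) (𝓝 p0) (𝓝 (t p0, s p0, x p0)) :=
    ht.prodMk (hs.prodMk hx)
  have h4 := hmap.eventually h3
  unfold J
  refine continuousAt_of_dominated (bound := fun y => B y * m) ?_ ?_ (h1.mul_const m) ?_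
  · filter_upwards [h4, hc] with p hp hcp
    exact ((S.Z_cont_y j _ _ _ hp.1).mul hcp).aestronglyMeasurable
  · filter_upwards [h4, hm] with p hp hmp
    refine Eventually.of_forall fun y => ?_
    rw [norm_mul]
    exact mul_le_mul (hp.2 y) (hmp y) (norm_nonneg _) (h2 y)
  · refine Eventually.of_forall fun y => ContinuousAt.mul ?_ (hΨ y)
    exact ContinuousAt.comp (f := fun p => (t p, s p, x p, y)) (x := p0)
      (S.Z_continuousAt j (t p0) (s p0) (x p0) y hst)
      (ht.prodMk (hs.prodMk (hx.prodMk continuousAt_const)))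

lemma J_deriv_x (j : ℕ) {t s : ℝ} (x : ℝ) {ψ : ℝ → ℝ} {m : ℝ} (hst : s < t) (hc : Continuous ψ)
    (hm : ∀ y, |ψ y| ≤ m) :
    HasDerivAt (fun x => S.J j t s ψ x) (S.J (j + 1) t s ψ x) x := by
  obtain ⟨B, h1, h2, h3⟩ := S.Z_dom (j + 1) t s x hst
  have hmap : Tendsto (fun x' : ℝ => (t, s, x')) (𝓝 x) (𝓝 (t, s, x)) :=
    (by fun_prop : Continuous (fun x' : ℝ => (t, s, x'))).continuousAt
  have h4 := hmap.eventually h3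
  unfold J
  refine (hasDerivAt_integral_of_dominated_loc_of_deriv_le (bound := fun y => B y * m)
    (F := fun x y => S.Z j t s x y * ψ y) (F' := fun x y => S.Z (j + 1) t s x y * ψ y)
    h4 ?_ ?_ ?_ ?_ (h1.mul_const m) ?_).2
  · exact Eventually.of_forall fun x' => ((S.Z_cont_y j _ _ _ hst).mul hc).aestronglyMeasurable
  · exact S.Z_integrable j t s x hst hc hm
  · exact ((S.Z_cont_y _ _ _ _ hst).mul hc).aestronglyMeasurable
  · refine Eventually.of_forall fun y x' hx' => ?_
    rw [norm_mul]
    exact mul_le_mul (hx'.2 y) (hm y) (norm_nonneg _) (h2 y)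
  · refine Eventually.of_forall fun y x' hx' => ?_
    refine HasDerivAt.mul_const ?_ (ψ y)
    have := (gk_hasDerivAt_x j (S.A t s y) (x' - y) (S.A_pos hst y))
    exact this.comp_sub_const x' y

lemma J_deriv_t {t s : ℝ} (x : ℝ) {ψ : ℝ → ℝ} {m : ℝ} (hst : s < t) (hc : Continuous ψ)
    (hm : ∀ y, |ψ y| ≤ m) :
    HasDerivAt (fun t => S.J 0 t s ψ x) (1 / 2 * S.J 2 t s (fun y => S.a t y * ψ y) x) t := by
  obtain ⟨B, h1, h2, h3⟩ := S.Z_dom 2 t s x hst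
  have hmap : Tendsto (fun t' : ℝ => (t', s, x)) (𝓝 t) (𝓝 (t, s, x)) :=
    (by fun_prop : Continuous (fun t' : ℝ => (t', s, x))).continuousAt
  have h4 := hmap.eventually h3
  have hm0 : 0 ≤ m := (abs_nonneg _).trans (hm 0)
  unfold J
  rw [← integral_const_mul]
  refine (hasDerivAt_integral_of_dominated_loc_of_deriv_le
    (bound := fun y => B y * (S.Lam * m))
    (F := fun t y => S.Z 0 t s x y * ψ y)
    (F' := fun t y => 1 / 2 * (S.Z 2 t s x y * (S.a t y * ψ y)))
    h4 ?_ ?_ ?_ ?_ (h1.mul_const _) ?_).2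
  · filter_upwards [h4] with t' ht'
    exact ((S.Z_cont_y 0 _ _ _ ht'.1).mul hc).aestronglyMeasurable
  · exact S.Z_integrable 0 t s x hst hc hm
  · exact (continuous_const.mul ((S.Z_cont_y _ _ _ _ hst).mul ((S.ca_x t).mul hc))).aestronglyMeasurable
  · refine Eventually.of_forall fun y t' ht' => ?_
    rw [norm_mul, norm_mul, norm_mul]
    have e1 : ‖(1 / 2 : ℝ)‖ ≤ 1 := by norm_num
    have e2 : ‖S.a t' y‖ ≤ S.Lam := by
      rw [Real.norm_eq_abs, abs_le]
      constructor
      · linarith [S.a_lb t' y, S.lam_pos, S.Lam_pos]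
      · exact S.a_ub t' y
    have e3 : ‖S.Z 2 t' s x y‖ ≤ B y := ht'.2 y
    have e4 : ‖ψ y‖ ≤ m := hm y
    have e5 := S.Lam_pos.le
    have e6 := h2 y
    calc _ ≤ 1 * (B y * (S.Lam * m)) := by gcongr
      _ = _ := one_mul _
  · refine Eventually.of_forall fun y t' ht' => ?_
    have h5 := (gk_hasDerivAt_v 0 (S.A t' s y) (x - y) (S.A_pos ht'.1 y)).comp t' (S.A_deriv t' s y)
    refine (h5.mul_const (ψ y)).congr_deriv ?_
    simp only [Z]; ring

lemma J_add (j : ℕ) {t s : ℝ} (x : ℝ) {ψ χ : ℝ → ℝ} {m m' : ℝ} (hst : s < t) (hc : Continuous ψ)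
    (hm : ∀ y, |ψ y| ≤ m) (hc' : Continuous χ) (hm' : ∀ y, |χ y| ≤ m') :
    S.J j t s (fun y => ψ y + χ y) x = S.J j t s ψ x + S.J j t s χ x := by
  unfold J
  rw [← integral_add (S.Z_integrable j t s x hst hc hm) (S.Z_integrable j t s x hst hc' hm')]
  simp only [mul_add]

lemma J_smul (j : ℕ) (t s : ℝ) (x r : ℝ) (ψ : ℝ → ℝ) :
    S.J j t s (fun y => r * ψ y) x = r * S.J j t s ψ x := by
  unfold J
  rw [← integral_const_mul]
  congr 1; funext y; ring

lemma gk_integrable (j : ℕ) {v : ℝ} (hv : 0 < v) : Integrable (fun x => gk j v x) := by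
  obtain ⟨C, hC, h⟩ := gk_bound v v hv hv j 0
  have h1 := (Hk_integrable (δ := 1) 0 hv one_pos).comp_neg
  have hcont : Continuous (fun x => gk j v x) := by
    rw [continuous_iff_continuousAt]
    exact fun x => (gk_hasDerivAt_x j v x hv).continuousAt
  refine (h1.const_mul C).mono' hcont.aestronglyMeasurable (Eventually.of_forall fun x => ?_)
  have := h 1 v x one_pos (by simp) (by simp)
  simpa using this

lemma gk2_integral {v : ℝ} (hv : 0 < v) (x : ℝ) : ∫ y, gk 2 v (x - y) = 0 := by
  rw [integral_sub_left_eq_self (fun y => gk 2 v y) volume x]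
  exact integral_eq_zero_of_hasDerivAt_of_integrable (fun x => gk_hasDerivAt_x 1 v x hv)
    (gk_integrable 2 hv) (gk_integrable 1 hv)

lemma J2_one : ∃ C : ℝ, 0 ≤ C ∧ ∀ t s x : ℝ, s < t →
    |S.J 2 t s (fun _ => 1) x| ≤ C / √(t - s) := by
  obtain ⟨C, hC, h⟩ := gk_bound S.lam S.Lam S.lam_pos S.Lam_pos 4 1
  have hL := S.L_pos
  refine ⟨C * S.L * √(4 * Real.pi * S.Lam), by positivity, fun t s x hst => ?_⟩
  have hpos : 0 < t - s := sub_pos.mpr hst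
  have hδ : 0 < √(t - s) := Real.sqrt_pos.mpr hpos
  have hsq : √(t - s) ^ 2 = t - s := Real.sq_sqrt hpos.le
  set δ := √(t - s)
  have hI1 : Integrable (fun y => S.Z 2 t s x y) := by
    have := S.Z_integrable 2 t s x hst (ψ := fun _ => 1) continuous_const (m := 1) (by simp)
    simpa using this
  have hI2 : Integrable (fun y => gk 2 (S.A t s x) (x - y)) :=
    (gk_integrable 2 (S.A_pos hst x)).comp_sub_left x
  have e : S.J 2 t s (fun _ => 1) x = ∫ y, (S.Z 2 t s x y - gk 2 (S.A t s x) (x - y)) := by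
    rw [integral_sub hI1 hI2, gk2_integral (S.A_pos hst x)]
    simp [J]
  have hb : ∀ y, ‖S.Z 2 t s x y - gk 2 (S.A t s x) (x - y)‖ ≤
      (C * S.L / δ) * Hk S.Lam δ (x - y) := by
    intro y
    have hD : ∀ v ∈ Icc (S.lam * δ ^ 2) (S.Lam * δ ^ 2),
        HasDerivWithinAt (fun v => |x - y| * gk 2 v (x - y))
          (|x - y| * (1 / 2 * gk 4 v (x - y))) (Icc (S.lam * δ ^ 2) (S.Lam * δ ^ 2)) v := by
      intro v hv
      have hlam := S.lam_pos
      have : 0 < v := lt_of_lt_of_le (by positivity) hv.1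
      exact ((gk_hasDerivAt_v 2 v (x - y) this).const_mul _).hasDerivWithinAt
    have hB : ∀ v ∈ Icc (S.lam * δ ^ 2) (S.Lam * δ ^ 2),
        ‖|x - y| * (1 / 2 * gk 4 v (x - y))‖ ≤ C * (δ / δ ^ 4 * Hk S.Lam δ (x - y)) := by
      intro v hv
      have := h δ v (x - y) hδ hv.1 hv.2
      rw [pow_one, pow_one] at this
      rw [norm_mul, norm_mul, Real.norm_eq_abs, abs_abs, Real.norm_eq_abs, Real.norm_eq_abs,
        abs_of_pos (by norm_num : (0:ℝ) < 1 / 2)]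
      have h0 : 0 ≤ |x - y| * |gk 4 v (x - y)| := by positivity
      linarith
    have hmem : ∀ y, S.A t s y ∈ Icc (S.lam * δ ^ 2) (S.Lam * δ ^ 2) := fun y => by
      rw [hsq]; exact ⟨S.A_lower hst.le y, S.A_upper hst.le y⟩
    have hmv := (convex_Icc _ _).norm_image_sub_le_of_norm_hasDerivWithin_le hD hB (hmem x) (hmem y)
    simp only [← mul_sub, norm_mul, norm_abs_eq_norm] at hmv
    by_cases hxy : x = y
    · subst hxy
      simp only [Z, sub_self, norm_zero]
      have := Hk_nonneg (Lam := S.Lam) 0 hδ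
      positivity
    · have hne : 0 < ‖x - y‖ := norm_pos_iff.mpr (sub_ne_zero.mpr hxy)
      have hl := S.A_lip hst.le y x
      rw [abs_sub_comm y x] at hl
      have hH := Hk_nonneg (Lam := S.Lam) (x - y) hδ
      have : ‖x - y‖ * ‖gk 2 (S.A t s y) (x - y) - gk 2 (S.A t s x) (x - y)‖ ≤
          ‖x - y‖ * ((C * S.L / δ) * Hk S.Lam δ (x - y)) := by
        refine hmv.trans ?_
        calc _ ≤ C * (δ / δ ^ 4 * Hk S.Lam δ (x - y)) * (S.L * |x - y| * (t - s)) := by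
              gcongr; exact hl
          _ = _ := by rw [← hsq, Real.norm_eq_abs]; field_simp
      exact le_of_mul_le_mul_left this hne
  have := norm_integral_le_of_norm_le ((Hk_integrable x S.Lam_pos hδ).const_mul _)
    (Eventually.of_forall hb)
  rw [integral_const_mul, Hk_integral x S.Lam_pos hδ, ← e] at this
  refine this.trans (le_of_eq ?_)
  ring

end Coef
end

section
open MeasureTheory Set Filter Topology

/-- the weight `τ ^ (-3/4)` -/
noncomputable def om (τ : ℝ) : ℝ := τ ^ (-(3 / 4) : ℝ)

lemma om_pos {τ : ℝ} (h : 0 < τ) : 0 < om τ := Real.rpow_pos_of_pos h _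

lemma om_nonneg {τ : ℝ} (h : 0 ≤ τ) : 0 ≤ om τ := Real.rpow_nonneg h _

lemma om_mul {t θ : ℝ} (h : 0 ≤ t) (h' : 0 ≤ θ) : om (t * θ) = om t * om θ :=
  Real.mul_rpow h h'

lemma om_anti {t s : ℝ} (h : 0 < s) (h' : s ≤ t) : om t ≤ om s :=
  Real.rpow_le_rpow_of_nonpos h h' (by norm_num)

lemma om_cont {t : ℝ} (h : 0 < t) : ContinuousAt om t :=
  Real.continuousAt_rpow_const _ _ (Or.inl h.ne')

lemma om_inv_sqrt {τ T : ℝ} (h : 0 < τ) (hT : τ ≤ T) : 1 / √τ ≤ T ^ (1 / 4 : ℝ) * om τ := by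
  have e : 1 / √τ = τ ^ (1 / 4 : ℝ) * om τ := by
    unfold om
    rw [← Real.rpow_add h, Real.sqrt_eq_rpow, one_div, ← Real.rpow_neg h.le]; norm_num
  rw [e]
  have := om_pos h
  gcongr

lemma om_one {τ T : ℝ} (h : 0 < τ) (hT : τ ≤ T) : 1 ≤ T ^ (3 / 4 : ℝ) * om τ := by
  have e : 1 = τ ^ (3 / 4 : ℝ) * om τ := by
    unfold om
    rw [← Real.rpow_add h]; norm_num
  have := om_pos h
  calc (1:ℝ) = τ ^ (3 / 4 : ℝ) * om τ := e
    _ ≤ _ := by gcongr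

lemma om_sqrt {τ : ℝ} (h : 0 < τ) : √√τ / √τ ^ 2 = om τ := by
  rw [Real.sq_sqrt h.le]
  unfold om
  rw [Real.sqrt_eq_rpow, Real.sqrt_eq_rpow, ← Real.rpow_mul h.le, div_eq_mul_inv]
  rw [← Real.rpow_neg_one τ, ← Real.rpow_add h]; norm_num

lemma om_intervalIntegrable (a b : ℝ) : IntervalIntegrable om volume a b :=
  intervalIntegral.intervalIntegrable_rpow' (by norm_num)

lemma om_integrableOn {t : ℝ} (ht : 0 ≤ t) : IntegrableOn om (Ioo 0 t) :=
  (((intervalIntegrable_iff_integrableOn_Ioc_of_le ht).mp (om_intervalIntegrable 0 t))).mono_set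
    Ioo_subset_Ioc_self

lemma om_sub_integrableOn {t : ℝ} (ht : 0 ≤ t) : IntegrableOn (fun s => om (t - s)) (Ioo 0 t) := by
  have h := (om_intervalIntegrable 0 t).comp_sub_left t
  rw [sub_zero, sub_self] at h
  exact ((intervalIntegrable_iff_integrableOn_Ioc_of_le ht).mp h.symm).mono_set Ioo_subset_Ioc_self

lemma omom_integrableOn {t : ℝ} (ht : 0 < t) :
    IntegrableOn (fun s => om (t - s) * om s) (Ioo 0 t) := by
  have h1 := ((om_integrableOn ht.le).add (om_sub_integrableOn ht.le)).const_mul (om (t / 2))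
  refine h1.mono' ?_ ?_
  · refine ContinuousOn.aestronglyMeasurable ?_ measurableSet_Ioo
    intro s hs
    refine (ContinuousAt.mul ?_ (om_cont hs.1)).continuousWithinAt
    exact ContinuousAt.comp (f := fun s => t - s) (om_cont (sub_pos.mpr hs.2)) (by fun_prop)
  · filter_upwards [ae_restrict_mem measurableSet_Ioo] with s hs
    have p1 := om_pos hs.1
    have p2 := om_pos (sub_pos.mpr hs.2)
    have p3 : 0 < om (t / 2) := om_pos (by linarith)
    rw [Real.norm_eq_abs, abs_of_pos (by positivity)]
    simp only [Pi.add_apply]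
    rcases le_total s (t / 2) with h | h
    · have : om (t - s) ≤ om (t / 2) := om_anti (by linarith) (by linarith)
      nlinarith
    · have : om s ≤ om (t / 2) := om_anti (by linarith) (by linarith)
      nlinarith

lemma scale_integral (F : ℝ → ℝ) {t : ℝ} (ht : 0 < t) :
    ∫ s in Ioo 0 t, F s = t * ∫ θ in Ioo (0:ℝ) 1, F (t * θ) := by
  rw [← integral_Ioc_eq_integral_Ioo, ← integral_Ioc_eq_integral_Ioo,
    ← intervalIntegral.integral_of_le ht.le, ← intervalIntegral.integral_of_le zero_le_one]
  have := intervalIntegral.mul_integral_comp_add_mul (a := 0) (b := 1) (f := F) t 0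
  simp only [zero_add, mul_zero, mul_one] at this
  exact this.symm

/-- Beta-type constant -/
noncomputable def omB : ℝ := ∫ θ in Ioo (0:ℝ) 1, om (1 - θ) * om θ

lemma omB_nonneg : 0 ≤ omB := by
  refine setIntegral_nonneg measurableSet_Ioo fun θ hθ => ?_
  exact mul_nonneg (om_nonneg (by linarith [hθ.2])) (om_nonneg hθ.1.le)

lemma omom_integral {t : ℝ} (ht : 0 < t) :
    ∫ s in Ioo 0 t, om (t - s) * om s = t * om t ^ 2 * omB := by
  rw [scale_integral _ ht, omB, mul_assoc, ← integral_const_mul (om t ^ 2)]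
  congr 1
  refine setIntegral_congr_fun (μ := volume) (s := Ioo (0:ℝ) 1) measurableSet_Ioo (fun θ hθ => ?_)
  have e : t - t * θ = t * (1 - θ) := by ring
  simp only [e]
  rw [om_mul ht.le (by linarith [hθ.2]), om_mul ht.le hθ.1.le]; ring

lemma om_integral {t : ℝ} (ht : 0 < t) :
    ∫ s in Ioo 0 t, om s = t * om t * ∫ θ in Ioo (0:ℝ) 1, om θ := by
  rw [scale_integral _ ht, mul_assoc, ← integral_const_mul (om t)]
  congr 1
  refine setIntegral_congr_fun (μ := volume) (s := Ioo (0:ℝ) 1) measurableSet_Ioo (fun θ hθ => ?_)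
  exact om_mul ht.le hθ.1.le

section Outer
variable {T C : ℝ} {F : ℝ → ℝ → ℝ → ℝ}

lemma outer_integrable
    (hF : ∀ t x s, 0 < s → s < t → t < T →
      ContinuousAt (fun p : ℝ × ℝ × ℝ => F p.1 p.2.1 p.2.2) (t, x, s))
    (hb : ∀ t x s, 0 < s → s < t → t < T → |F t x s| ≤ C * (om (t - s) * om s))
    (t x : ℝ) (ht : 0 < t) (htT : t < T) : IntegrableOn (fun s => F t x s) (Ioo 0 t) := by
  refine ((omom_integrableOn ht).const_mul C).mono' ?_ ?_
  · refine ContinuousOn.aestronglyMeasurable ?_ measurableSet_Ioo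
    intro s hs
    exact (ContinuousAt.comp (f := fun s => ((t, x, s) : ℝ × ℝ × ℝ)) (hF t x s hs.1 hs.2 htT)
      (by fun_prop)).continuousWithinAt
  · filter_upwards [ae_restrict_mem measurableSet_Ioo] with s hs
    exact hb t x s hs.1 hs.2 htT

lemma outer_bound
    (hb : ∀ t x s, 0 < s → s < t → t < T → |F t x s| ≤ C * (om (t - s) * om s))
    (t x : ℝ) (ht : 0 < t) (htT : t < T) :
    |∫ s in Ioo 0 t, F t x s| ≤ C * (t * om t ^ 2 * omB) := by
  have := norm_integral_le_of_norm_le (f := fun s => F t x s) ((omom_integrableOn ht).const_mul C)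
    (by filter_upwards [ae_restrict_mem measurableSet_Ioo] with s hs
        exact hb t x s hs.1 hs.2 htT)
  rwa [integral_const_mul, omom_integral ht] at this

lemma outer_cont (hC : 0 ≤ C)
    (hF : ∀ t x s, 0 < s → s < t → t < T →
      ContinuousAt (fun p : ℝ × ℝ × ℝ => F p.1 p.2.1 p.2.2) (t, x, s))
    (hb : ∀ t x s, 0 < s → s < t → t < T → |F t x s| ≤ C * (om (t - s) * om s))
    (t x : ℝ) (ht : 0 < t) (htT : t < T) :
    ContinuousAt (fun p : ℝ × ℝ => ∫ s in Ioo 0 p.1, F p.1 p.2 s) (t, x) := by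
  have e1 : ∀ᶠ p : ℝ × ℝ in 𝓝 (t, x), t / 2 < p.1 :=
    ContinuousAt.eventually_lt continuousAt_const (by fun_prop) (by simp; linarith)
  have e2 : ∀ᶠ p : ℝ × ℝ in 𝓝 (t, x), p.1 < T :=
    ContinuousAt.eventually_lt (by fun_prop) continuousAt_const (by simpa using htT)
  have key : ContinuousAt (fun p : ℝ × ℝ => ∫ θ in Ioo (0:ℝ) 1, F p.1 p.2 (p.1 * θ)) (t, x) := by
    refine continuousAt_of_dominated
      (bound := fun θ => C * om (t / 2) ^ 2 * (om (1 - θ) * om θ)) ?_ ?_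
      ((omom_integrableOn one_pos).const_mul _) ?_
    · filter_upwards [e1, e2] with p h1 h2
      refine ContinuousOn.aestronglyMeasurable ?_ measurableSet_Ioo
      intro θ hθ
      have hp : 0 < p.1 := by linarith
      exact (ContinuousAt.comp (f := fun θ => ((p.1, p.2, p.1 * θ) : ℝ × ℝ × ℝ))
        (hF p.1 p.2 (p.1 * θ) (mul_pos hp hθ.1) (by nlinarith [hθ.2]) h2)
        (by fun_prop)).continuousWithinAt
    · filter_upwards [e1, e2] with p h1 h2
      filter_upwards [ae_restrict_mem measurableSet_Ioo] with θ hθ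
      have hp : 0 < p.1 := by linarith
      have h3 := hb p.1 p.2 (p.1 * θ) (mul_pos hp hθ.1) (by nlinarith [hθ.2]) h2
      have e : p.1 - p.1 * θ = p.1 * (1 - θ) := by ring
      have h5 : 0 ≤ om (1 - θ) := om_nonneg (by linarith [hθ.2])
      have h6 : 0 ≤ om θ := om_nonneg hθ.1.le
      rw [e, om_mul hp.le (by linarith [hθ.2]), om_mul hp.le hθ.1.le] at h3
      have h4 : om p.1 ≤ om (t / 2) := om_anti (by linarith) h1.le
      have h7 := om_nonneg hp.le
      rw [Real.norm_eq_abs]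
      calc _ ≤ _ := h3
        _ = C * om p.1 ^ 2 * (om (1 - θ) * om θ) := by ring
        _ ≤ _ := by gcongr
    · filter_upwards [ae_restrict_mem measurableSet_Ioo] with θ hθ
      exact ContinuousAt.comp (f := fun p : ℝ × ℝ => ((p.1, p.2, p.1 * θ) : ℝ × ℝ × ℝ))
        (x := (t, x)) (hF t x (t * θ) (mul_pos ht hθ.1) (by nlinarith [hθ.2]) htT) (by fun_prop)
  have h := (continuousAt_fst (p := (t, x))).mul key
  refine h.congr ?_
  filter_upwards [e1] with p h1
  exact (scale_integral _ (by linarith : 0 < p.1)).symm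
end Outer

namespace Coef
variable (S : Coef)

lemma J0_scale {t s : ℝ} (hst : s < t) (x : ℝ) (ψ : ℝ → ℝ) : S.J 0 t s ψ x =
    ∫ z, (√(t - s) * gk 0 (S.A t s (x - √(t - s) * z)) (√(t - s) * z)) *
      ψ (x - √(t - s) * z) := by
  have hδ : 0 < √(t - s) := Real.sqrt_pos.mpr (sub_pos.mpr hst)
  set δ := √(t - s)
  have h1 := Measure.integral_comp_mul_left
    (fun w => gk 0 (S.A t s (x - w)) w * ψ (x - w)) δ
  have h2 := integral_sub_left_eq_self (fun w => gk 0 (S.A t s (x - w)) w * ψ (x - w)) volume x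
  simp only [sub_sub_cancel] at h2
  rw [← h2, abs_of_pos (inv_pos.mpr hδ), smul_eq_mul] at h1
  unfold J Z
  simp only [mul_assoc]
  rw [integral_const_mul, h1]
  field_simp

lemma gk0_scale {δ w z : ℝ} (hδ : 0 < δ) (hw : 0 < w) : δ * gk 0 (δ ^ 2 * w) (δ * z) = gk 0 w z := by
  simp only [gk]
  rw [show 2 * Real.pi * (δ ^ 2 * w) = δ ^ 2 * (2 * Real.pi * w) by ring,
    Real.sqrt_mul (by positivity), Real.sqrt_sq hδ.le]
  have : -(δ * z) ^ 2 / (2 * (δ ^ 2 * w)) = -z ^ 2 / (2 * w) := by field_simp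
  rw [this]
  field_simp

lemma gk0_integral {v : ℝ} (hv : 0 < v) : ∫ z, gk 0 v z = 1 := by
  simp only [gk]
  rw [integral_const_mul]
  have e : ∀ z : ℝ, -z ^ 2 / (2 * v) = -(1 / (2 * v)) * z ^ 2 := fun z => by ring
  simp only [e]
  rw [integral_gaussian]
  have : Real.pi / (1 / (2 * v)) = 2 * Real.pi * v := by field_simp
  rw [this]
  have : 0 < √(2 * Real.pi * v) := Real.sqrt_pos.mpr (by have := Real.pi_pos; positivity)
  field_simp

/-- averaged diffusion -/
noncomputable def abar (t s y : ℝ) : ℝ := ∫ θ in (0:ℝ)..1, S.a (s + (t - s) * θ) y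

lemma abar_cont (s : ℝ) : Continuous (fun p : ℝ × ℝ => S.abar p.1 s p.2) := by
  refine intervalIntegral.continuous_parametric_intervalIntegral_of_continuous'
    (f := fun (p : ℝ × ℝ) θ => S.a (s + (p.1 - s) * θ) p.2) ?_ 0 1
  exact S.ca.comp (by fun_prop : Continuous (fun q : (ℝ × ℝ) × ℝ => (s + (q.1.1 - s) * q.2, q.1.2)))

lemma A_eq_abar (t s y : ℝ) : S.A t s y = (t - s) * S.abar t s y := by
  unfold A abar
  rw [intervalIntegral.mul_integral_comp_add_mul (f := fun r => S.a r y) (t - s) s]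
  simp

lemma J0_tendsto (s x0 : ℝ) {ψ : ℝ → ℝ} {m : ℝ} (hc : Continuous ψ) (hm : ∀ y, |ψ y| ≤ m) :
    Tendsto (fun p : ℝ × ℝ => S.J 0 p.1 s ψ p.2) (𝓝[Ioi s ×ˢ univ] (s, x0)) (𝓝 (ψ x0)) := by
  obtain ⟨C, hC, hb⟩ := gk0_bound S.lam S.Lam S.lam_pos S.Lam_pos 0
  have hm0 : 0 ≤ m := (abs_nonneg _).trans (hm 0)
  have hpos : ∀ᶠ p : ℝ × ℝ in 𝓝[Ioi s ×ˢ univ] (s, x0), s < p.1 := by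
    filter_upwards [self_mem_nhdsWithin] with p hp using hp.1
  have hlim : ψ x0 = ∫ z, gk 0 (S.a s x0) z * ψ x0 := by
    rw [integral_mul_const, gk0_integral (S.lam_pos.trans_le (S.a_lb _ _)), one_mul]
  rw [hlim]
  have hcongr : (fun p : ℝ × ℝ => ∫ z, (√(p.1 - s) * gk 0 (S.A p.1 s (p.2 - √(p.1 - s) * z))
      (√(p.1 - s) * z)) * ψ (p.2 - √(p.1 - s) * z)) =ᶠ[𝓝[Ioi s ×ˢ univ] (s, x0)]
      (fun p : ℝ × ℝ => S.J 0 p.1 s ψ p.2) := by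
    filter_upwards [hpos] with p hp
    exact (S.J0_scale hp p.2 ψ).symm
  refine Tendsto.congr' hcongr ?_
  have hLam := S.Lam_pos
  refine tendsto_integral_filter_of_dominated_convergence
    (fun z => C * Real.exp (-(1 / (4 * S.Lam)) * z ^ 2) * m) ?_ ?_ ?_ ?_
  · filter_upwards [hpos] with p hp
    refine Continuous.aestronglyMeasurable ?_
    refine Continuous.mul (continuous_const.mul ?_) (hc.comp (by fun_prop))
    rw [continuous_iff_continuousAt]
    intro z
    refine ContinuousAt.comp (f := fun z => (S.A p.1 s (p.2 - √(p.1 - s) * z), √(p.1 - s) * z))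
      (gk_continuousAt 0 _ (S.A_pos hp _)) (Continuous.continuousAt ?_)
    refine Continuous.prodMk ?_ (by fun_prop)
    exact S.A_cont.comp (by fun_prop : Continuous (fun z : ℝ => (p.1, s, p.2 - √(p.1 - s) * z)))
  · filter_upwards [hpos] with p hp
    refine Eventually.of_forall fun z => ?_
    have hp' : 0 < p.1 - s := sub_pos.mpr hp
    have hδ : 0 < √(p.1 - s) := Real.sqrt_pos.mpr hp'
    have h1 := hb (√(p.1 - s)) (S.A p.1 s (p.2 - √(p.1 - s) * z)) (√(p.1 - s) * z) hδ
      (by rw [Real.sq_sqrt hp'.le]; exact S.A_lower hp.le _)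
      (by rw [Real.sq_sqrt hp'.le]; exact S.A_upper hp.le _)
    simp only [pow_zero, one_mul] at h1
    set δ := √(p.1 - s)
    rw [norm_mul]
    refine mul_le_mul ?_ (hm _) (norm_nonneg _) (by positivity)
    rw [norm_mul, Real.norm_eq_abs, Real.norm_eq_abs, abs_of_pos hδ]
    calc _ ≤ δ * (C * Hk S.Lam δ (δ * z)) := by gcongr
      _ = _ := by
        rw [Hk_eq]
        have : -(1 / (4 * S.Lam * δ ^ 2)) * (δ * z) ^ 2 = -(1 / (4 * S.Lam)) * z ^ 2 := by
          field_simp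
        rw [this]; field_simp
  · exact ((integrable_exp_neg_mul_sq (by positivity)).const_mul C).mul_const m
  · refine Eventually.of_forall fun z => ?_
    have hcont : ContinuousAt (fun p : ℝ × ℝ => gk 0 (S.abar p.1 s (p.2 - √(p.1 - s) * z)) z *
        ψ (p.2 - √(p.1 - s) * z)) (s, x0) := by
      have hval : S.abar s s (x0 - √(s - s) * z) = S.a s x0 := by simp [abar]
      refine ContinuousAt.mul ?_ (Continuous.continuousAt (hc.comp (by fun_prop)))
      refine ContinuousAt.comp (f := fun p : ℝ × ℝ => (S.abar p.1 s (p.2 - √(p.1 - s) * z), z))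
        (x := (s, x0)) (gk_continuousAt 0 _ ?_) (Continuous.continuousAt ?_)
      · simp only [hval]; exact S.lam_pos.trans_le (S.a_lb _ _)
      · refine Continuous.prodMk ?_ (by fun_prop)
        exact (S.abar_cont s).comp
          (by fun_prop : Continuous (fun p : ℝ × ℝ => (p.1, p.2 - √(p.1 - s) * z)))
    have h1 : Tendsto _ (𝓝[Ioi s ×ˢ univ] (s, x0)) _ := hcont.tendsto.mono_left nhdsWithin_le_nhds
    have hval : gk 0 (S.abar s s (x0 - √(s - s) * z)) z * ψ (x0 - √(s - s) * z) =
        gk 0 (S.a s x0) z * ψ x0 := by simp [abar]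
    simp only [hval] at h1
    refine h1.congr' ?_
    filter_upwards [hpos] with p hp
    have hp' : 0 < p.1 - s := sub_pos.mpr hp
    have hδ : 0 < √(p.1 - s) := Real.sqrt_pos.mpr hp'
    have hA := S.A_pos hp (p.2 - √(p.1 - s) * z)
    rw [A_eq_abar] at hA
    rw [A_eq_abar, ← gk0_scale hδ (pos_of_mul_pos_right hA hp'.le) (z := z), Real.sq_sqrt hp'.le]

end Coef
end

section
open MeasureTheory Set Filter Topology

namespace Coef
variable (S : Coef)

lemma a_abs (t x : ℝ) : |S.a t x| ≤ S.Lam := by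
  rw [abs_le]
  constructor
  · linarith [S.a_lb t x, S.lam_pos, S.Lam_pos]
  · exact S.a_ub t x

lemma J_bd (j : ℕ) : ∃ C : ℝ, 0 ≤ C ∧ ∀ (t s x m : ℝ) (ψ : ℝ → ℝ), s < t →
    (∀ y, |ψ y| ≤ m) → |S.J j t s ψ x| ≤ C * (m / √(t - s) ^ j) := by
  obtain ⟨C, hC, h⟩ := S.J_bound j
  refine ⟨C, hC, fun t s x m ψ hst hm => ?_⟩
  have := h t s x m 0 ψ hst (by simpa using hm) ((abs_nonneg _).trans (hm 0)) le_rfl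
  simpa using this

lemma J2_bd : ∃ C : ℝ, 0 ≤ C ∧ ∀ (t s x m : ℝ) (ψ : ℝ → ℝ), s < t →
    (∀ y, |ψ y| ≤ m) →
    |S.J 2 t s (fun y => (S.a t x - S.a t y) * ψ y) x| ≤ C * (m / √(t - s)) := by
  obtain ⟨C, hC, h⟩ := S.J_bound 2
  have hL := S.L_pos
  refine ⟨C * S.L, by positivity, fun t s x m ψ hst hm => ?_⟩
  have hm0 : 0 ≤ m := (abs_nonneg _).trans (hm 0)
  have hδ : 0 < √(t - s) := Real.sqrt_pos.mpr (sub_pos.mpr hst)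
  have := h t s x 0 (S.L * m) (fun y => (S.a t x - S.a t y) * ψ y) hst (fun y => ?_) le_rfl
    (by positivity)
  · refine this.trans (le_of_eq ?_)
    field_simp
    ring
  · rw [abs_mul]
    calc _ ≤ (S.L * |x - y|) * m := by gcongr; exacts [S.a_lip t x y, hm y]
      _ = _ := by ring

/-- the parametrix error kernel -/
noncomputable def Kk (t s : ℝ) (ψ : ℝ → ℝ) (x : ℝ) : ℝ :=
  1 / 2 * S.J 2 t s (fun y => (S.a t x - S.a t y) * ψ y) x + S.b t x * S.J 1 t s ψ x
    + S.c t x * S.J 0 t s ψ x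

/-- time derivative of the parametrix -/
noncomputable def Dk (t s : ℝ) (ψ : ℝ → ℝ) (x : ℝ) : ℝ :=
  1 / 2 * S.J 2 t s (fun y => S.a t y * ψ y) x

lemma Kk_bound (T : ℝ) : ∃ C : ℝ, 0 ≤ C ∧ ∀ (t s x m : ℝ) (ψ : ℝ → ℝ), s < t → t - s ≤ T →
    (∀ y, |ψ y| ≤ m) → |S.Kk t s ψ x| ≤ C * (m / √(t - s)) := by
  obtain ⟨C2, hC2, h2⟩ := S.J2_bd
  obtain ⟨C1, hC1, h1⟩ := S.J_bd 1
  obtain ⟨C0, hC0, h0⟩ := S.J_bd 0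
  have hL := S.Lam_pos
  refine ⟨C2 + S.Lam * C1 + S.Lam * C0 * √T, by positivity, fun t s x m ψ hst hT hm => ?_⟩
  have hm0 : 0 ≤ m := (abs_nonneg _).trans (hm 0)
  have hδ : 0 < √(t - s) := Real.sqrt_pos.mpr (sub_pos.mpr hst)
  have hδT : √(t - s) ≤ √T := Real.sqrt_le_sqrt hT
  have k2 := h2 t s x m ψ hst hm
  have k1 := h1 t s x m ψ hst hm
  have k0 := h0 t s x m ψ hst hm
  simp only [pow_one, pow_zero, div_one] at k1 k0
  set δ := √(t - s)
  have k0' : m ≤ √T * (m / δ) := by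
    calc m = δ * (m / δ) := by field_simp
      _ ≤ _ := by gcongr
  have hp : 0 ≤ m / δ := by positivity
  unfold Kk
  calc _ ≤ |1 / 2 * S.J 2 t s (fun y => (S.a t x - S.a t y) * ψ y) x| + |S.b t x * S.J 1 t s ψ x|
      + |S.c t x * S.J 0 t s ψ x| := (abs_add_le _ _).trans (by gcongr; exact abs_add_le _ _)
    _ = 1 / 2 * |S.J 2 t s (fun y => (S.a t x - S.a t y) * ψ y) x| + |S.b t x| * |S.J 1 t s ψ x|
      + |S.c t x| * |S.J 0 t s ψ x| := by rw [abs_mul, abs_mul, abs_mul]; norm_num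
    _ ≤ 1 * (C2 * (m / δ)) + S.Lam * (C1 * (m / δ)) + S.Lam * (C0 * (√T * (m / δ))) := by
        gcongr
        · norm_num
        · exact S.b_bd t x
        · exact S.c_bd t x
        · exact k0.trans (by gcongr)
    _ = _ := by ring

lemma J_mv (j : ℕ) {t s : ℝ} (x x' : ℝ) {ψ : ℝ → ℝ} {m B : ℝ} (hst : s < t) (hc : Continuous ψ)
    (hm : ∀ y, |ψ y| ≤ m) (hB : ∀ z, |x' - z| ≤ |x - x'| → |S.J (j + 1) t s ψ z| ≤ B) :
    |S.J j t s ψ x - S.J j t s ψ x'| ≤ B * |x - x'| := by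
  have := Convex.norm_image_sub_le_of_norm_hasDerivWithin_le (f := fun z => S.J j t s ψ z)
    (f' := fun z => S.J (j + 1) t s ψ z) (C := B) (s := uIcc x' x) (x := x') (y := x)
    (fun z _ => (S.J_deriv_x j z hst hc hm).hasDerivWithinAt)
    (fun z hz => hB z ?_) (convex_uIcc _ _) left_mem_uIcc right_mem_uIcc
  · simpa using this
  · rw [abs_sub_comm x' z]
    exact abs_sub_left_of_mem_uIcc hz

lemma sub_mul_cont (t x : ℝ) {ψ : ℝ → ℝ} (hc : Continuous ψ) :
    Continuous (fun y => (S.a t x - S.a t y) * ψ y) :=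
  (continuous_const.sub (S.ca_x t)).mul hc

lemma sub_mul_bd (t x : ℝ) {ψ : ℝ → ℝ} {m : ℝ} (hm : ∀ y, |ψ y| ≤ m) (y : ℝ) :
    |(S.a t x - S.a t y) * ψ y| ≤ (2 * S.Lam) * m := by
  have hL := S.Lam_pos
  rw [abs_mul]
  have : |S.a t x - S.a t y| ≤ 2 * S.Lam := by
    refine (abs_sub _ _).trans ?_
    linarith [S.a_abs t x, S.a_abs t y]
  gcongr
  exact hm y

lemma Kk_holder_near (T : ℝ) (hT0 : 0 < T) : ∃ C : ℝ, 0 ≤ C ∧ ∀ (t s x x' m : ℝ) (ψ : ℝ → ℝ), s < t → t - s ≤ T →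
    Continuous ψ → (∀ y, |ψ y| ≤ m) → |x - x'| ≤ √(t - s) →
    |S.Kk t s ψ x - S.Kk t s ψ x'| ≤ C * (m * (|x - x'| / √(t - s) ^ 2)) := by
  obtain ⟨C3, hC3, h3⟩ := S.J_bound 3
  obtain ⟨C2, hC2, h2⟩ := S.J_bd 2
  obtain ⟨C1, hC1, h1⟩ := S.J_bd 1
  obtain ⟨C0, hC0, h0⟩ := S.J_bd 0
  have hLam := S.Lam_pos
  have hL := S.L_pos
  refine ⟨S.L * C2 + 2 * C3 * S.L + (S.L * C1 * √T + S.Lam * C2) + (S.L * C0 * T + S.Lam * C1 * √T),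
    by positivity, fun t s x x' m ψ hst hT hc hm hD => ?_⟩
  have hm0 : 0 ≤ m := (abs_nonneg _).trans (hm 0)
  have hpos : 0 < t - s := sub_pos.mpr hst
  have hδ : 0 < √(t - s) := Real.sqrt_pos.mpr hpos
  have hδT : √(t - s) ≤ √T := Real.sqrt_le_sqrt hT
  have hsq : √(t - s) ^ 2 ≤ T := by rw [Real.sq_sqrt hpos.le]; exact hT
  have k2 := fun x => h2 t s x m ψ hst hm
  have k1 := fun x => h1 t s x m ψ hst hm
  have k0 := fun x => h0 t s x m ψ hst hm
  have hB3 : ∀ z, |x' - z| ≤ |x - x'| →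
      |S.J 3 t s (fun y => (S.a t x' - S.a t y) * ψ y) z| ≤ C3 * (2 * S.L * m / √(t - s) ^ 2) := by
    intro z hz
    have := h3 t s z (S.L * m * |x - x'|) (S.L * m) (fun y => (S.a t x' - S.a t y) * ψ y) hst
      (fun y => ?_) (by positivity) (by positivity)
    · refine this.trans ?_
      gcongr ?_ * ?_
      rw [div_le_div_iff₀ (by positivity) (by positivity)]
      have : S.L * m * |x - x'| ≤ S.L * m * √(t - s) := by gcongr
      calc _ ≤ (S.L * m * √(t - s) + S.L * m * √(t - s)) * √(t - s) ^ 2 := by gcongr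
        _ = _ := by ring
    · rw [abs_mul]
      have h4 : |x' - y| ≤ |x - x'| + |z - y| := by
        have : x' - y = (x' - z) + (z - y) := by ring
        rw [this]; exact (abs_add_le _ _).trans (by gcongr)
      calc _ ≤ (S.L * |x' - y|) * m := by gcongr; exacts [S.a_lip t x' y, hm y]
        _ ≤ (S.L * (|x - x'| + |z - y|)) * m := by gcongr
        _ = _ := by ring
  have m2 := S.J_mv 2 x x' hst (S.sub_mul_cont t x' hc) (S.sub_mul_bd t x' hm) hB3
  have m1 := S.J_mv 1 x x' hst hc hm (fun z _ => k2 z)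
  have m0 := S.J_mv 0 x x' hst hc hm (fun z _ => k1 z)
  have e : S.J 2 t s (fun y => (S.a t x - S.a t y) * ψ y) x =
      (S.a t x - S.a t x') * S.J 2 t s ψ x + S.J 2 t s (fun y => (S.a t x' - S.a t y) * ψ y) x := by
    rw [← S.J_smul, ← S.J_add 2 x hst (ψ := fun y => (S.a t x - S.a t x') * ψ y) (m := (2 * S.Lam) * m) (m' := (2 * S.Lam) * m)
      (continuous_const.mul hc) ?_ (S.sub_mul_cont t x' hc) (S.sub_mul_bd t x' hm)]
    · congr 1; funext y; ring
    · intro y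
      rw [abs_mul]
      have : |S.a t x - S.a t x'| ≤ 2 * S.Lam := by
        refine (abs_sub _ _).trans ?_
        linarith [S.a_abs t x, S.a_abs t x']
      gcongr
      exact hm y
  unfold Kk
  rw [e]
  have e2 : 1 / 2 * ((S.a t x - S.a t x') * S.J 2 t s ψ x +
      S.J 2 t s (fun y => (S.a t x' - S.a t y) * ψ y) x) + S.b t x * S.J 1 t s ψ x +
      S.c t x * S.J 0 t s ψ x - (1 / 2 * S.J 2 t s (fun y => (S.a t x' - S.a t y) * ψ y) x' +
      S.b t x' * S.J 1 t s ψ x' + S.c t x' * S.J 0 t s ψ x') =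
      1 / 2 * ((S.a t x - S.a t x') * S.J 2 t s ψ x) +
      1 / 2 * (S.J 2 t s (fun y => (S.a t x' - S.a t y) * ψ y) x
        - S.J 2 t s (fun y => (S.a t x' - S.a t y) * ψ y) x') +
      ((S.b t x - S.b t x') * S.J 1 t s ψ x + S.b t x' * (S.J 1 t s ψ x - S.J 1 t s ψ x')) +
      ((S.c t x - S.c t x') * S.J 0 t s ψ x + S.c t x' * (S.J 0 t s ψ x - S.J 0 t s ψ x')) := by
    ring
  rw [e2]
  have la := S.a_lip t x x'
  have lb := S.b_lip t x x'
  have lc := S.c_lip t x x'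
  have bb := S.b_bd t x'
  have bc := S.c_bd t x'
  have q2 := k2 x
  have q1 := k1 x
  have q0 := k0 x
  simp only [pow_one, pow_zero, div_one] at q1 q0 k1 k0 m0
  set δ := √(t - s)
  set D := |x - x'|
  have hD0 : 0 ≤ D := abs_nonneg _
  have hp : 0 ≤ m * (D / δ ^ 2) := by positivity
  have r1 : m * (D / δ) ≤ √T * (m * (D / δ ^ 2)) := by
    calc m * (D / δ) = δ * (m * (D / δ ^ 2)) := by field_simp
      _ ≤ _ := by gcongr
  have r0 : m * D ≤ T * (m * (D / δ ^ 2)) := by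
    calc m * D = δ ^ 2 * (m * (D / δ ^ 2)) := by field_simp
      _ ≤ _ := by gcongr
  have t1 : |1 / 2 * ((S.a t x - S.a t x') * S.J 2 t s ψ x)| ≤ S.L * C2 * (m * (D / δ ^ 2)) := by
    rw [abs_mul, abs_mul]
    calc _ ≤ 1 * ((S.L * D) * (C2 * (m / δ ^ 2))) := by gcongr; norm_num [abs_of_pos]
      _ = _ := by ring
  have t2 : |1 / 2 * (S.J 2 t s (fun y => (S.a t x' - S.a t y) * ψ y) x
        - S.J 2 t s (fun y => (S.a t x' - S.a t y) * ψ y) x')| ≤ 2 * C3 * S.L * (m * (D / δ ^ 2)) := by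
    rw [abs_mul]
    calc _ ≤ 1 * (C3 * (2 * S.L * m / δ ^ 2) * D) := by gcongr; norm_num [abs_of_pos]
      _ = _ := by ring
  have t3 : |(S.b t x - S.b t x') * S.J 1 t s ψ x| ≤ S.L * C1 * √T * (m * (D / δ ^ 2)) := by
    rw [abs_mul]
    calc _ ≤ (S.L * D) * (C1 * (m / δ)) := by gcongr
      _ = S.L * C1 * (m * (D / δ)) := by ring
      _ ≤ S.L * C1 * (√T * (m * (D / δ ^ 2))) := by gcongr
      _ = _ := by ring
  have t4 : |S.b t x' * (S.J 1 t s ψ x - S.J 1 t s ψ x')| ≤ S.Lam * C2 * (m * (D / δ ^ 2)) := by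
    rw [abs_mul]
    calc _ ≤ S.Lam * (C2 * (m / δ ^ 2) * D) := by gcongr
      _ = _ := by ring
  have t5 : |(S.c t x - S.c t x') * S.J 0 t s ψ x| ≤ S.L * C0 * T * (m * (D / δ ^ 2)) := by
    rw [abs_mul]
    calc _ ≤ (S.L * D) * (C0 * m) := by gcongr
      _ = S.L * C0 * (m * D) := by ring
      _ ≤ S.L * C0 * (T * (m * (D / δ ^ 2))) := by gcongr
      _ = _ := by ring
  have t6 : |S.c t x' * (S.J 0 t s ψ x - S.J 0 t s ψ x')| ≤ S.Lam * C1 * √T * (m * (D / δ ^ 2)) := by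
    rw [abs_mul]
    calc _ ≤ S.Lam * (C1 * (m / δ) * D) := by
          gcongr
      _ = S.Lam * C1 * (m * (D / δ)) := by ring
      _ ≤ S.Lam * C1 * (√T * (m * (D / δ ^ 2))) := by gcongr
      _ = _ := by ring
  refine (abs_add_le _ _).trans ?_
  refine (add_le_add ((abs_add_le _ _).trans (add_le_add (abs_add_le _ _) (abs_add_le _ _)))
    (abs_add_le _ _)).trans ?_
  linarith

lemma Kk_holder (T : ℝ) (hT0 : 0 < T) : ∃ C : ℝ, 0 ≤ C ∧ ∀ (t s x x' m : ℝ) (ψ : ℝ → ℝ), s < t → t - s ≤ T →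
    Continuous ψ → (∀ y, |ψ y| ≤ m) →
    |S.Kk t s ψ x - S.Kk t s ψ x'| ≤ C * m * om (t - s) * √|x - x'| := by
  obtain ⟨C, hC, h⟩ := S.Kk_holder_near T hT0
  obtain ⟨C', hC', h'⟩ := S.Kk_bound T
  refine ⟨C + 2 * C', by positivity, fun t s x x' m ψ hst hT hc hm => ?_⟩
  have hm0 : 0 ≤ m := (abs_nonneg _).trans (hm 0)
  have hpos : 0 < t - s := sub_pos.mpr hst
  have hδ : 0 < √(t - s) := Real.sqrt_pos.mpr hpos
  have hom := om_sqrt hpos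
  have homn := om_nonneg hpos.le
  have hrp : 0 ≤ m * om (t - s) * √|x - x'| := by positivity
  have hss : √√(t - s) * √√(t - s) = √(t - s) := Real.mul_self_sqrt hδ.le
  rcases le_total |x - x'| √(t - s) with hD | hD
  · refine (h t s x x' m ψ hst hT hc hm hD).trans ?_
    have : |x - x'| / √(t - s) ^ 2 ≤ om (t - s) * √|x - x'| := by
      rw [← hom, div_mul_eq_mul_div]
      gcongr
      calc |x - x'| = √|x - x'| * √|x - x'| := (Real.mul_self_sqrt (abs_nonneg _)).symm
        _ ≤ √√(t - s) * √|x - x'| := by gcongr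
    calc _ ≤ C * (m * (om (t - s) * √|x - x'|)) := by gcongr
      _ ≤ _ := by nlinarith
  · have : 1 / √(t - s) ≤ om (t - s) * √|x - x'| := by
      have : 1 / √(t - s) = om (t - s) * √√(t - s) := by
        rw [← hom, div_mul_eq_mul_div, hss]; field_simp
      rw [this]
      gcongr
    have b1 := h' t s x m ψ hst hT hm
    have b2 := h' t s x' m ψ hst hT hm
    calc _ ≤ |S.Kk t s ψ x| + |S.Kk t s ψ x'| := abs_sub _ _
      _ ≤ 2 * C' * m * (1 / √(t - s)) := by
        have e : m / √(t - s) = m * (1 / √(t - s)) := by ring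
        rw [e] at b1 b2; nlinarith
      _ ≤ 2 * C' * m * (om (t - s) * √|x - x'|) := by gcongr
      _ ≤ _ := by nlinarith

lemma Dk_eq {t s : ℝ} (x : ℝ) {ψ : ℝ → ℝ} {m : ℝ} (hst : s < t) (hc : Continuous ψ)
    (hm : ∀ y, |ψ y| ≤ m) : S.Dk t s ψ x = 1 / 2 * S.a t x * S.J 2 t s ψ x
      - 1 / 2 * S.J 2 t s (fun y => (S.a t x - S.a t y) * ψ y) x := by
  have hL := S.Lam_pos
  have : S.a t x * S.J 2 t s ψ x = S.J 2 t s (fun y => (S.a t x - S.a t y) * ψ y) x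
      + S.J 2 t s (fun y => S.a t y * ψ y) x := by
    rw [← S.J_smul, ← S.J_add 2 x hst (χ := fun y => S.a t y * ψ y) (m := (2 * S.Lam) * m) (m' := S.Lam * m)
      (S.sub_mul_cont t x hc) (S.sub_mul_bd t x hm) ((S.ca_x t).mul hc) ?_]
    · congr 1; funext y; ring
    · intro y
      rw [abs_mul]
      have := S.a_abs t y
      gcongr
      exact hm y
  unfold Dk
  linarith

lemma J2_holder (T : ℝ) : ∃ C : ℝ, 0 ≤ C ∧ ∀ (t s x m : ℝ) (ψ : ℝ → ℝ), s < t → t - s ≤ T →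
    Continuous ψ → (∀ y, |ψ y| ≤ m) → (∀ y, |ψ y - ψ x| ≤ m * √|x - y|) →
    |S.J 2 t s ψ x| ≤ C * m * om (t - s) := by
  obtain ⟨C2, hC2, h2⟩ := S.J_bound 2
  obtain ⟨C, hC, h⟩ := S.J2_one
  refine ⟨2 * C2 + C * |T ^ (1 / 4 : ℝ)|, by positivity, fun t s x m ψ hst hT hc hm hh => ?_⟩
  have hm0 : 0 ≤ m := (abs_nonneg _).trans (hm 0)
  have hpos : 0 < t - s := sub_pos.mpr hst
  have hδ : 0 < √(t - s) := Real.sqrt_pos.mpr hpos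
  have hδ' : 0 < √√(t - s) := Real.sqrt_pos.mpr hδ
  have hom := om_sqrt hpos
  have homn := om_nonneg hpos.le
  have hss : √√(t - s) * √√(t - s) = √(t - s) := Real.mul_self_sqrt hδ.le
  have e : S.J 2 t s ψ x = S.J 2 t s (fun y => ψ y - ψ x) x + ψ x * S.J 2 t s (fun _ => 1) x := by
    rw [← S.J_smul, ← S.J_add 2 x hst (ψ := fun y => ψ y - ψ x) (χ := fun _ => ψ x * 1) (m := 2 * m) (m' := m)
      (hc.sub continuous_const) ?_ continuous_const (by simpa using hm x)]
    · congr 1; funext y; ring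
    · intro y
      refine (abs_sub _ _).trans ?_
      linarith [hm y, hm x]
  have b1 := h2 t s x (m * √√(t - s)) (m / √√(t - s)) (fun y => ψ y - ψ x) hst (fun y => ?_)
    (by positivity) (by positivity)
  · have b2 := h t s x hst
    have b3 := om_inv_sqrt hpos hT
    have e1 : (m * √√(t - s) + m / √√(t - s) * √(t - s)) / √(t - s) ^ 2 = 2 * m * om (t - s) := by
      rw [← hom]
      have e0 : m / √√(t - s) * √(t - s) = m * √√(t - s) := by
        rw [div_mul_eq_mul_div, div_eq_iff hδ'.ne', mul_assoc, hss]
      rw [e0]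
      ring
    rw [e1] at b1
    rw [e]
    calc _ ≤ |S.J 2 t s (fun y => ψ y - ψ x) x| + |ψ x| * |S.J 2 t s (fun _ => 1) x| := by
            rw [← abs_mul]; exact abs_add_le _ _
      _ ≤ C2 * (2 * m * om (t - s)) + m * (C * (1 / √(t - s))) := by
          gcongr
          · exact hm x
          · exact b2.trans (le_of_eq (by ring))
      _ ≤ C2 * (2 * m * om (t - s)) + m * (C * (|T ^ (1 / 4 : ℝ)| * om (t - s))) := by
          gcongr
          exact b3.trans (by gcongr; exact le_abs_self _)
      _ = _ := by ring
  · refine (hh y).trans ?_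
    have : √|x - y| ≤ √√(t - s) + |x - y| / √√(t - s) := by
      rcases le_total |x - y| √(t - s) with hD | hD
      · have := Real.sqrt_le_sqrt hD
        have : 0 ≤ |x - y| / √√(t - s) := by positivity
        linarith
      · have h5 : √|x - y| ≤ |x - y| / √√(t - s) := by
          rw [le_div_iff₀ hδ']
          calc _ ≤ √|x - y| * √|x - y| := by gcongr
            _ = _ := Real.mul_self_sqrt (abs_nonneg _)
        linarith
    calc _ ≤ m * (√√(t - s) + |x - y| / √√(t - s)) := by gcongr
      _ = _ := by ring

/-- All bounds for Hölder densities -/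
lemma all_holder (T : ℝ) : ∃ C : ℝ, 0 ≤ C ∧ ∀ (t s x m : ℝ) (ψ : ℝ → ℝ), s < t → t - s ≤ T →
    Continuous ψ → (∀ y, |ψ y| ≤ m) → (∀ x y, |ψ y - ψ x| ≤ m * √|x - y|) →
    |S.J 0 t s ψ x| ≤ C * m ∧
    |S.J 0 t s ψ x| ≤ C * m * om (t - s) ∧ |S.J 1 t s ψ x| ≤ C * m * om (t - s) ∧
    |S.J 2 t s ψ x| ≤ C * m * om (t - s) ∧ |S.Dk t s ψ x| ≤ C * m * om (t - s) := by
  obtain ⟨C, hC, h⟩ := S.J2_holder T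
  obtain ⟨C2, hC2, h2⟩ := S.J2_bd
  obtain ⟨C1, hC1, h1⟩ := S.J_bd 1
  obtain ⟨C0, hC0, h0⟩ := S.J_bd 0
  have hL := S.Lam_pos
  set q := |T ^ (1 / 4 : ℝ)|
  set q' := |T ^ (3 / 4 : ℝ)|
  have hq : 0 ≤ q := abs_nonneg _
  have hq' : 0 ≤ q' := abs_nonneg _
  refine ⟨C0 + C0 * q' + C1 * q + C + (S.Lam * C + C2 * q), by positivity,
    fun t s x m ψ hst hT hc hm hh => ?_⟩
  have hm0 : 0 ≤ m := (abs_nonneg _).trans (hm 0)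
  have hpos : 0 < t - s := sub_pos.mpr hst
  have homn := om_nonneg hpos.le
  have b3 : 1 / √(t - s) ≤ q * om (t - s) :=
    (om_inv_sqrt hpos hT).trans (by gcongr; exact le_abs_self _)
  have b4 : 1 ≤ q' * om (t - s) :=
    (om_one hpos hT).trans (by gcongr; exact le_abs_self _)
  have k0 := h0 t s x m ψ hst hm
  have k1 := h1 t s x m ψ hst hm
  have k2 := h2 t s x m ψ hst hm
  have k := h t s x m ψ hst hT hc hm (hh x)
  simp only [pow_one, pow_zero, div_one] at k1 k0
  have p1 : C1 * (m / √(t - s)) ≤ C1 * q * (m * om (t - s)) := by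
    calc _ = C1 * m * (1 / √(t - s)) := by ring
      _ ≤ C1 * m * (q * om (t - s)) := by gcongr
      _ = _ := by ring
  have p2 : C2 * (m / √(t - s)) ≤ C2 * q * (m * om (t - s)) := by
    calc _ = C2 * m * (1 / √(t - s)) := by ring
      _ ≤ C2 * m * (q * om (t - s)) := by gcongr
      _ = _ := by ring
  have p0 : C0 * m ≤ C0 * q' * (m * om (t - s)) := by
    calc _ = C0 * m * 1 := by ring
      _ ≤ C0 * m * (q' * om (t - s)) := by gcongr
      _ = _ := by ring
  have pD : |S.Dk t s ψ x| ≤ (S.Lam * C + C2 * q) * (m * om (t - s)) := by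
    rw [S.Dk_eq x hst hc hm]
    refine (abs_sub _ _).trans ?_
    rw [abs_mul, abs_mul, abs_mul]
    have := S.a_abs t x
    calc _ ≤ 1 * S.Lam * (C * m * om (t - s)) + 1 * (C2 * (m / √(t - s))) := by
          gcongr <;> norm_num [abs_of_pos]
      _ ≤ _ := by linarith
  have hn : 0 ≤ m * om (t - s) := by positivity
  have n0 := mul_nonneg hC0 hm0
  have n1 := mul_nonneg (mul_nonneg hC1 hq) hm0
  have n2 := mul_nonneg (mul_nonneg hC2 hq) hm0
  have n3 := mul_nonneg hC hm0
  have n4 := mul_nonneg (mul_nonneg hL.le hC) hm0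
  have n5 := mul_nonneg (mul_nonneg hC0 hq') hm0
  have N0 := mul_nonneg hC0 hn
  have N1 := mul_nonneg (mul_nonneg hC1 hq) hn
  have N2 := mul_nonneg (mul_nonneg hC2 hq) hn
  have N3 := mul_nonneg hC hn
  have N4 := mul_nonneg (mul_nonneg hL.le hC) hn
  have N5 := mul_nonneg (mul_nonneg hC0 hq') hn
  refine ⟨by linarith, by linarith, by linarith, by linarith, by linarith⟩

lemma Kk_cont {X : Type*} [TopologicalSpace X] [FirstCountableTopology X] {p0 : X}
    {t s x : X → ℝ} {Ψ : X → ℝ → ℝ} {m : ℝ}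
    (ht : ContinuousAt t p0) (hs : ContinuousAt s p0) (hx : ContinuousAt x p0)
    (hst : s p0 < t p0) (hm : ∀ᶠ p in 𝓝 p0, ∀ y, |Ψ p y| ≤ m)
    (hc : ∀ᶠ p in 𝓝 p0, Continuous (Ψ p)) (hΨ : ∀ y, ContinuousAt (fun p => Ψ p y) p0) :
    ContinuousAt (fun p => S.Kk (t p) (s p) (Ψ p) (x p)) p0 := by
  have hcomp : ∀ {f : ℝ → ℝ → ℝ}, Continuous (fun p : ℝ × ℝ => f p.1 p.2) → ∀ {x : X → ℝ},
      ContinuousAt x p0 → ContinuousAt (fun p => f (t p) (x p)) p0 := fun {f} hf {x} hx =>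
    ContinuousAt.comp (f := fun p => (t p, x p)) (x := p0) hf.continuousAt (ht.prodMk hx)
  unfold Kk
  refine ((continuousAt_const.mul ?_).add ((hcomp S.cb hx).mul ?_)).add ((hcomp S.cc hx).mul ?_)
  · refine S.J_cont 2 (m := 2 * S.Lam * m) ht hs hx hst ?_ ?_ ?_
    · filter_upwards [hm] with p hp
      exact S.sub_mul_bd _ _ hp
    · filter_upwards [hc] with p hp
      exact S.sub_mul_cont _ _ hp
    · intro y
      exact ((hcomp S.ca hx).sub (hcomp S.ca continuousAt_const)).mul (hΨ y)
  · exact S.J_cont 1 ht hs hx hst hm hc hΨ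
  · exact S.J_cont 0 ht hs hx hst hm hc hΨ

lemma Dk_cont {X : Type*} [TopologicalSpace X] [FirstCountableTopology X] {p0 : X}
    {t s x : X → ℝ} {Ψ : X → ℝ → ℝ} {m : ℝ}
    (ht : ContinuousAt t p0) (hs : ContinuousAt s p0) (hx : ContinuousAt x p0)
    (hst : s p0 < t p0) (hm : ∀ᶠ p in 𝓝 p0, ∀ y, |Ψ p y| ≤ m)
    (hc : ∀ᶠ p in 𝓝 p0, Continuous (Ψ p)) (hΨ : ∀ y, ContinuousAt (fun p => Ψ p y) p0) :
    ContinuousAt (fun p => S.Dk (t p) (s p) (Ψ p) (x p)) p0 := by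
  have hL := S.Lam_pos
  unfold Dk
  refine continuousAt_const.mul (S.J_cont 2 (m := S.Lam * m) ht hs hx hst ?_ ?_ ?_)
  · filter_upwards [hm] with p hp y
    rw [abs_mul]
    have := S.a_abs (t p) y
    gcongr
    exact hp y
  · filter_upwards [hc] with p hp
    exact (S.ca_x _).mul hp
  · intro y
    exact (ContinuousAt.comp (f := fun p => (t p, y)) (x := p0) S.ca.continuousAt
      (ht.prodMk continuousAt_const)).mul (hΨ y)

end Coef
end

section
open MeasureTheory Set Filter Topology

/-- densities with an admissible singularity at time zero -/
structure Good (T R : ℝ) (ρ : ℝ → ℝ → ℝ) : Prop where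
  R_nonneg : 0 ≤ R
  cont : ∀ s y, 0 < s → s < T → ContinuousAt (fun p : ℝ × ℝ => ρ p.1 p.2) (s, y)
  bd : ∀ s y, 0 < s → s < T → |ρ s y| ≤ R * om s

namespace Good
variable {T R : ℝ} {ρ : ℝ → ℝ → ℝ}

lemma cont_y (h : Good T R ρ) {s : ℝ} (h0 : 0 < s) (h1 : s < T) : Continuous (ρ s) := by
  rw [continuous_iff_continuousAt]
  intro y
  exact ContinuousAt.comp (f := fun y => ((s, y) : ℝ × ℝ)) (h.cont s y h0 h1) (by fun_prop)

lemma ev (h : Good T R ρ) (t x s : ℝ) (h0 : 0 < s) (h1 : s < T) :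
    (∀ᶠ p : ℝ × ℝ × ℝ in 𝓝 (t, x, s), ∀ y, |ρ p.2.2 y| ≤ R * om (s / 2)) ∧
    (∀ᶠ p : ℝ × ℝ × ℝ in 𝓝 (t, x, s), Continuous (ρ p.2.2)) ∧
    (∀ y, ContinuousAt (fun p : ℝ × ℝ × ℝ => ρ p.2.2 y) (t, x, s)) := by
  have e1 : ∀ᶠ p : ℝ × ℝ × ℝ in 𝓝 (t, x, s), s / 2 < p.2.2 :=
    ContinuousAt.eventually_lt continuousAt_const (by fun_prop) (by simp; linarith)
  have e2 : ∀ᶠ p : ℝ × ℝ × ℝ in 𝓝 (t, x, s), p.2.2 < T :=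
    ContinuousAt.eventually_lt (by fun_prop) continuousAt_const (by simpa using h1)
  have hR := h.R_nonneg
  refine ⟨?_, ?_, ?_⟩
  · filter_upwards [e1, e2] with p hp hp' y
    refine (h.bd _ y (by linarith) hp').trans ?_
    gcongr
    exact om_anti (by linarith) hp.le
  · filter_upwards [e1, e2] with p hp hp'
    exact h.cont_y (by linarith) hp'
  · intro y
    exact ContinuousAt.comp (f := fun p : ℝ × ℝ × ℝ => ((p.2.2, y) : ℝ × ℝ)) (x := (t, x, s))
      (h.cont s y h0 h1) (by fun_prop)

end Good

lemma om_exp (ε : ℝ) (hε : 0 < ε) : ∃ μ : ℝ, 0 ≤ μ ∧ ∀ τ, 0 < τ →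
    Real.exp (-(μ * τ)) / √τ ≤ ε * om τ := by
  refine ⟨1 / ε ^ 4, by positivity, fun τ hτ => ?_⟩
  have hδ : 0 < √τ := Real.sqrt_pos.mpr hτ
  have hδ' : 0 < √√τ := Real.sqrt_pos.mpr hδ
  have hss : √√τ ^ 2 = √τ := Real.sq_sqrt hδ.le
  have hs : √τ ^ 2 = τ := Real.sq_sqrt hτ.le
  set z := √√τ / ε with hz
  have hz0 : 0 < z := by positivity
  have e : 1 / ε ^ 4 * τ = z ^ 4 := by
    have : √√τ ^ 4 = τ := by
      calc √√τ ^ 4 = (√√τ ^ 2) ^ 2 := by ring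
        _ = τ := by rw [hss, hs]
    rw [hz, div_pow, this]; ring
  have h1 : Real.exp (-z ^ 4) ≤ 1 / z := by
    rw [Real.exp_neg, ← one_div]
    refine one_div_le_one_div_of_le hz0 ?_
    have := Real.add_one_le_exp (z ^ 4)
    nlinarith [sq_nonneg (z ^ 2 - 1), sq_nonneg (z - 1), sq_nonneg z]
  rw [e, ← om_sqrt hτ]
  calc _ ≤ (1 / z) / √τ := by gcongr
    _ = _ := by
      rw [hz]
      field_simp
      linarith

lemma t_om {t T : ℝ} (h : 0 < t) (hT : t ≤ T) : t * om t ≤ T ^ (1 / 4 : ℝ) := by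
  have : t * om t = t ^ (1 / 4 : ℝ) := by
    unfold om
    nth_rewrite 1 [← Real.rpow_one t]
    rw [← Real.rpow_add h]; norm_num
  rw [this]
  exact Real.rpow_le_rpow h.le hT (by norm_num)

namespace Coef
variable (S : Coef)

lemma Kk_sub {t s : ℝ} (x : ℝ) {ψ χ : ℝ → ℝ} {m m' : ℝ} (hst : s < t) (hc : Continuous ψ)
    (hm : ∀ y, |ψ y| ≤ m) (hc' : Continuous χ) (hm' : ∀ y, |χ y| ≤ m') :
    S.Kk t s (fun y => ψ y - χ y) x = S.Kk t s ψ x - S.Kk t s χ x := by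
  have key : ∀ j (ψ χ : ℝ → ℝ) (m m' : ℝ), Continuous ψ → (∀ y, |ψ y| ≤ m) → Continuous χ →
      (∀ y, |χ y| ≤ m') → S.J j t s (fun y => ψ y - χ y) x = S.J j t s ψ x - S.J j t s χ x := by
    intro j ψ χ m m' hc hm hc' hm'
    unfold J
    rw [← integral_sub (S.Z_integrable j t s x hst hc hm) (S.Z_integrable j t s x hst hc' hm')]
    simp only [mul_sub]
  unfold Kk
  rw [key 1 ψ χ m m' hc hm hc' hm', key 0 ψ χ m m' hc hm hc' hm']
  have := key 2 _ _ _ _ (S.sub_mul_cont t x hc) (S.sub_mul_bd t x hm)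
    (S.sub_mul_cont t x hc') (S.sub_mul_bd t x hm')
  simp only [← mul_sub] at this
  rw [this]; ring

section fix
variable {T R : ℝ} {ρ : ℝ → ℝ → ℝ}

lemma KF_cont (h : Good T R ρ) (t x s : ℝ) (h0 : 0 < s) (h1 : s < t) (h2 : t < T) :
    ContinuousAt (fun p : ℝ × ℝ × ℝ => S.Kk p.1 p.2.2 (ρ p.2.2) p.2.1) (t, x, s) := by
  obtain ⟨e1, e2, e3⟩ := h.ev t x s h0 (h1.trans h2)
  exact S.Kk_cont (t := fun p : ℝ × ℝ × ℝ => p.1) (s := fun p => p.2.2) (x := fun p => p.2.1)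
    (by fun_prop) (by fun_prop) (by fun_prop) h1 e1 e2 e3

lemma KF_bd (T : ℝ) : ∃ C : ℝ, 0 ≤ C ∧ ∀ R ρ, Good T R ρ → ∀ t x s, 0 < s → s < t → t < T →
    |S.Kk t s (ρ s) x| ≤ C * R * (om (t - s) * om s) := by
  obtain ⟨C, hC, hb⟩ := S.Kk_bound T
  refine ⟨C * |T ^ (1 / 4 : ℝ)|, by positivity, fun R ρ h t x s h0 h1 h2 => ?_⟩
  have := hb t s x (R * om s) (ρ s) h1 (by linarith) (fun y => h.bd s y h0 (h1.trans h2))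
  have hR := h.R_nonneg
  have ho := om_nonneg h0.le
  have ho' := om_nonneg (sub_pos.2 h1).le
  have b3 := om_inv_sqrt (T := T) (sub_pos.mpr h1) (by linarith)
  calc _ ≤ _ := this
    _ = C * (R * om s) * (1 / √(t - s)) := by ring
    _ ≤ C * (R * om s) * (|T ^ (1 / 4 : ℝ)| * om (t - s)) := by
      gcongr
      exact b3.trans (by gcongr; exact le_abs_self _)
    _ = _ := by ring

/-- domain of the fixed point problem -/
abbrev Dom (T : ℝ) := {p : ℝ × ℝ // 0 < p.1 ∧ p.1 < T}

open scoped BoundedContinuousFunction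

open Classical in
/-- the density attached to a bounded continuous function -/
noncomputable def dens (T μ : ℝ) (g : Dom T →ᵇ ℝ) (s y : ℝ) : ℝ :=
  if h : 0 < s ∧ s < T then om s * Real.exp (μ * s) * g ⟨(s, y), h⟩ else 0

lemma dens_eq {T : ℝ} (μ : ℝ) (g : Dom T →ᵇ ℝ) (s y : ℝ) (h : 0 < s ∧ s < T) :
    dens T μ g s y = om s * Real.exp (μ * s) * g ⟨(s, y), h⟩ := dif_pos h

lemma dens_good {T : ℝ} {μ : ℝ} (hμ : 0 ≤ μ) (g : Dom T →ᵇ ℝ) :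
    Good T (Real.exp (μ * T) * ‖g‖) (dens T μ g) := by
  refine ⟨by positivity, ?_, ?_⟩
  · intro s y h0 h1
    have hopen : IsOpen {p : ℝ × ℝ | 0 < p.1 ∧ p.1 < T} :=
      (isOpen_lt continuous_const continuous_fst).inter (isOpen_lt continuous_fst continuous_const)
    have hon : ContinuousOn (fun p : ℝ × ℝ => dens T μ g p.1 p.2) {p : ℝ × ℝ | 0 < p.1 ∧ p.1 < T} := by
      rw [continuousOn_iff_continuous_domRestrict]
      have : ({p : ℝ × ℝ | 0 < p.1 ∧ p.1 < T}.domRestrict fun p : ℝ × ℝ => dens T μ g p.1 p.2) =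
          fun p : Dom T => om p.1.1 * Real.exp (μ * p.1.1) * g p := by
        funext p
        exact dens_eq μ g p.1.1 p.1.2 p.2
      rw [this]
      refine Continuous.mul (Continuous.mul ?_ (by fun_prop)) g.continuous
      rw [continuous_iff_continuousAt]
      intro p
      exact ContinuousAt.comp (f := fun p : Dom T => p.1.1) (x := p) (om_cont p.2.1) (by fun_prop)
    exact hon.continuousAt (hopen.mem_nhds ⟨h0, h1⟩)
  · intro s y h0 h1
    rw [dens_eq μ g s y ⟨h0, h1⟩, abs_mul, abs_mul, abs_of_nonneg (om_nonneg h0.le), Real.abs_exp]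
    have := g.norm_coe_le_norm ⟨(s, y), ⟨h0, h1⟩⟩
    rw [Real.norm_eq_abs] at this
    have ho := om_nonneg h0.le
    calc _ ≤ om s * Real.exp (μ * T) * ‖g‖ := by gcongr
      _ = _ := by ring

lemma exists_rho {T : ℝ} (hT : 0 < T) {φ : ℝ → ℝ} (hφ : Continuous φ) {mφ : ℝ} (hm : ∀ y, |φ y| ≤ mφ) :
    ∃ R ρ, Good T R ρ ∧ (∀ s, 0 < s → s < T → ∀ x y, |ρ s y - ρ s x| ≤ R * om s * √|x - y|) ∧
      ∀ t x, 0 < t → t < T → ρ t x = S.Kk t 0 φ x + ∫ s in Ioo 0 t, S.Kk t s (ρ s) x := by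
  have hm0 : 0 ≤ mφ := (abs_nonneg _).trans (hm 0)
  obtain ⟨C, hC, hb⟩ := S.Kk_bound T
  obtain ⟨C1, hC1, hb1⟩ := S.KF_bd T
  obtain ⟨CH, hCH, hH⟩ := S.Kk_holder T hT
  set q := T ^ (1 / 4 : ℝ) with hq
  have hq0 : 0 < q := Real.rpow_pos_of_pos hT _
  have hB := omB_nonneg
  obtain ⟨μ, hμ, hμe⟩ := om_exp (1 / (2 * (C * q * omB + 1))) (by positivity)
  set ε := 1 / (2 * (C * q * omB + 1)) with hε
  have hε0 : 0 < ε := by positivity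
  have hκ : C * ε * q * omB ≤ 1 / 2 := by
    rw [hε]
    have : C * (1 / (2 * (C * q * omB + 1))) * q * omB = (C * q * omB) / (2 * (C * q * omB + 1)) := by
      ring
    rw [this, div_le_div_iff₀ (by positivity) (by norm_num)]
    nlinarith [mul_nonneg (mul_nonneg hC hq0.le) hB]
  -- the map
  have hex : ∀ g : Dom T →ᵇ ℝ, ∃ g' : Dom T →ᵇ ℝ, ∀ t x (h : 0 < t ∧ t < T),
      g' ⟨(t, x), h⟩ = (om t * Real.exp (μ * t))⁻¹ *
        (S.Kk t 0 φ x + ∫ s in Ioo 0 t, S.Kk t s (dens T μ g s) x) := by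
    intro g
    have hg := dens_good hμ g
    set R := Real.exp (μ * T) * ‖g‖
    have hR := hg.R_nonneg
    refine ⟨BoundedContinuousFunction.ofNormedAddCommGroup
      (fun p : Dom T => (om p.1.1 * Real.exp (μ * p.1.1))⁻¹ *
        (S.Kk p.1.1 0 φ p.1.2 + ∫ s in Ioo 0 p.1.1, S.Kk p.1.1 s (dens T μ g s) p.1.2)) ?_
      (C * mφ * q + C1 * R * (q * omB)) ?_, fun t x h => rfl⟩
    · rw [continuous_iff_continuousAt]
      rintro ⟨⟨t, x⟩, h⟩
      have : ContinuousAt (fun p : ℝ × ℝ => (om p.1 * Real.exp (μ * p.1))⁻¹ *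
        (S.Kk p.1 0 φ p.2 + ∫ s in Ioo 0 p.1, S.Kk p.1 s (dens T μ g s) p.2)) (t, x) := by
        refine ContinuousAt.mul (ContinuousAt.inv₀ (ContinuousAt.mul ?_ (by fun_prop)) ?_)
          (ContinuousAt.add ?_ ?_)
        · exact ContinuousAt.comp (f := fun p : ℝ × ℝ => p.1) (x := (t, x)) (om_cont h.1) (by fun_prop)
        · exact (mul_pos (om_pos h.1) (Real.exp_pos _)).ne'
        · exact S.Kk_cont (X := ℝ × ℝ) (t := fun p => p.1) (s := fun _ => 0) (x := fun p => p.2)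
            (Ψ := fun _ => φ) (by fun_prop) (by fun_prop) (by fun_prop) h.1
            (Eventually.of_forall fun _ => hm) (Eventually.of_forall fun _ => hφ)
            (fun y => continuousAt_const)
        · exact outer_cont (F := fun t x s => S.Kk t s (dens T μ g s) x) (C := C1 * R) (by positivity)
            (S.KF_cont hg) (hb1 R _ hg) t x h.1 h.2
      exact ContinuousAt.comp (f := fun p : Dom T => p.1) (x := ⟨(t, x), h⟩) this (by fun_prop)
    · rintro ⟨⟨t, x⟩, h⟩
      have o1 := om_pos h.1
      have o2 := t_om h.1 h.2.le
      have i1 : 1 ≤ Real.exp (μ * t) := Real.one_le_exp (mul_nonneg hμ h.1.le)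
      have k1 := hb t 0 x mφ φ h.1 (by linarith [h.2]) hm
      rw [sub_zero] at k1
      have k2 := outer_bound (F := fun t x s => S.Kk t s (dens T μ g s) x) (hb1 R _ hg) t x h.1 h.2
      have b3 := om_inv_sqrt h.1 h.2.le
      have k3 : |S.Kk t 0 φ x| ≤ C * mφ * q * om t := by
        calc _ ≤ _ := k1
          _ = C * mφ * (1 / √t) := by ring
          _ ≤ C * mφ * (q * om t) := by gcongr
          _ = _ := by ring
      have k4 : |∫ s in Ioo 0 t, S.Kk t s (dens T μ g s) x| ≤ C1 * R * (q * omB) * om t := by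
        calc _ ≤ _ := k2
          _ = C1 * R * (t * om t * omB) * om t := by ring
          _ ≤ _ := by gcongr
      rw [Real.norm_eq_abs]
      show |(om t * Real.exp (μ * t))⁻¹ *
        (S.Kk t 0 φ x + ∫ s in Ioo 0 t, S.Kk t s (dens T μ g s) x)| ≤ _
      rw [abs_mul, abs_of_pos (by positivity), inv_mul_le_iff₀ (by positivity)]
      refine (abs_add_le _ _).trans ((add_le_add k3 k4).trans ?_)
      have : 0 ≤ om t * (C * mφ * q + C1 * R * (q * omB)) := by positivity
      calc _ = om t * (C * mφ * q + C1 * R * (q * omB)) * 1 := by ring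
        _ ≤ om t * (C * mφ * q + C1 * R * (q * omB)) * Real.exp (μ * t) := by gcongr
        _ = _ := by ring
  choose Φ hΦ using hex
  have hcontr : ContractingWith (1 / 2 : NNReal) Φ := by
    refine ⟨by rw [← NNReal.coe_lt_coe]; norm_num, LipschitzWith.of_dist_le_mul fun g g' => ?_⟩
    rw [BoundedContinuousFunction.dist_le (by positivity)]
    rintro ⟨⟨t, x⟩, h⟩
    rw [hΦ g t x h, hΦ g' t x h, Real.dist_eq, ← mul_sub, add_sub_add_left_eq_sub]
    have hg := dens_good hμ g
    have hg' := dens_good hμ g'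
    rw [← integral_sub
      (outer_integrable (F := fun t x s => S.Kk t s (dens T μ g s) x) (S.KF_cont hg)
        (hb1 _ _ hg) t x h.1 h.2)
      (outer_integrable (F := fun t x s => S.Kk t s (dens T μ g' s) x) (S.KF_cont hg')
        (hb1 _ _ hg') t x h.1 h.2)]
    set N := dist g g'
    have hN : 0 ≤ N := dist_nonneg
    have o1 := om_pos h.1
    have o2 := t_om h.1 h.2.le
    have key : ∀ s ∈ Ioo 0 t, ‖S.Kk t s (dens T μ g s) x - S.Kk t s (dens T μ g' s) x‖ ≤
        (C * N * Real.exp (μ * t) * ε) * (om (t - s) * om s) := by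
      intro s hs
      have hs' : 0 < s ∧ s < T := ⟨hs.1, hs.2.trans h.2⟩
      have o3 := om_pos hs.1
      rw [Real.norm_eq_abs, ← S.Kk_sub x hs.2 (hg.cont_y hs'.1 hs'.2) (fun y => hg.bd s y hs'.1 hs'.2)
        (hg'.cont_y hs'.1 hs'.2) (fun y => hg'.bd s y hs'.1 hs'.2)]
      have := hb t s x (om s * Real.exp (μ * s) * N)
        (fun y => dens T μ g s y - dens T μ g' s y) hs.2 (by linarith [h.2, hs.1]) (fun y => ?_)
      · refine this.trans ?_
        have e1 := hμe (t - s) (sub_pos.2 hs.2)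
        have e2 : Real.exp (μ * s) = Real.exp (μ * t) * Real.exp (-(μ * (t - s))) := by
          rw [← Real.exp_add]; congr 1; ring
        calc C * (om s * Real.exp (μ * s) * N / √(t - s))
            = C * om s * Real.exp (μ * t) * N * (Real.exp (-(μ * (t - s))) / √(t - s)) := by
              rw [e2]; ring
          _ ≤ C * om s * Real.exp (μ * t) * N * (ε * om (t - s)) := by gcongr
          _ = _ := by ring
      · rw [dens_eq μ g s y hs', dens_eq μ g' s y hs', ← mul_sub, abs_mul, abs_of_pos (by positivity)]
        gcongr
        rw [← Real.dist_eq]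
        exact g.dist_coe_le_dist _
    have k := norm_integral_le_of_norm_le ((omom_integrableOn h.1).const_mul _)
      ((ae_restrict_mem measurableSet_Ioo).mono key)
    rw [integral_const_mul, omom_integral h.1, Real.norm_eq_abs] at k
    rw [abs_mul, abs_of_pos (by positivity), inv_mul_le_iff₀ (by positivity)]
    refine k.trans ?_
    calc _ = N * Real.exp (μ * t) * om t * (C * ε * (t * om t) * omB) := by ring
      _ ≤ N * Real.exp (μ * t) * om t * (C * ε * q * omB) := by gcongr
      _ ≤ N * Real.exp (μ * t) * om t * (1 / 2) := by gcongr
      _ = om t * Real.exp (μ * t) * (((1 / 2 : NNReal) : ℝ) * N) := by push_cast; ring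
  set g := hcontr.fixedPoint Φ
  have hfix : Φ g = g := hcontr.fixedPoint_isFixedPt
  have hg := dens_good hμ g
  set R := Real.exp (μ * T) * ‖g‖
  have hR := hg.R_nonneg
  have heq : ∀ t x, 0 < t → t < T → dens T μ g t x =
      S.Kk t 0 φ x + ∫ s in Ioo 0 t, S.Kk t s (dens T μ g s) x := by
    intro t x h0 h1
    have o1 := om_pos h0
    rw [dens_eq μ g t x ⟨h0, h1⟩]
    nth_rewrite 1 [← hfix]
    rw [hΦ g t x ⟨h0, h1⟩]
    field_simp
  refine ⟨R + (CH * mφ + CH * R * (q * omB)), dens T μ g, ⟨by positivity, hg.cont, ?_⟩, ?_, heq⟩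
  · intro s y h0 h1
    refine (hg.bd s y h0 h1).trans ?_
    have := om_nonneg h0.le
    gcongr
    have : 0 ≤ (CH * mφ + CH * R * (q * omB)) := by positivity
    linarith
  · intro t h0 h1 x y
    have o1 := om_pos h0
    have o2 := t_om h0 h1.le
    rw [heq t x h0 h1, heq t y h0 h1, add_sub_add_comm]
    rw [← integral_sub
      (outer_integrable (F := fun t x s => S.Kk t s (dens T μ g s) x) (S.KF_cont hg)
        (hb1 _ _ hg) t y h0 h1)
      (outer_integrable (F := fun t x s => S.Kk t s (dens T μ g s) x) (S.KF_cont hg)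
        (hb1 _ _ hg) t x h0 h1)]
    have k1 := hH t 0 y x mφ φ h0 (by linarith) hφ hm
    rw [sub_zero, abs_sub_comm y x] at k1
    have key : ∀ s ∈ Ioo 0 t, ‖S.Kk t s (dens T μ g s) y - S.Kk t s (dens T μ g s) x‖ ≤
        (CH * R * √|x - y|) * (om (t - s) * om s) := by
      intro s hs
      have hs' : 0 < s ∧ s < T := ⟨hs.1, hs.2.trans h1⟩
      have := hH t s y x (R * om s) (dens T μ g s) hs.2 (by linarith [hs.1])
        (hg.cont_y hs'.1 hs'.2) (fun y => hg.bd s y hs'.1 hs'.2)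
      rw [abs_sub_comm y x] at this
      refine this.trans (le_of_eq (by ring))
    have k := norm_integral_le_of_norm_le ((omom_integrableOn h0).const_mul _)
      ((ae_restrict_mem measurableSet_Ioo).mono key)
    rw [integral_const_mul, omom_integral h0, Real.norm_eq_abs] at k
    refine (abs_add_le _ _).trans ((add_le_add k1 k).trans ?_)
    have r : 0 ≤ √|x - y| := Real.sqrt_nonneg _
    calc _ = (CH * mφ + CH * R * (t * om t * omB)) * om t * √|x - y| := by ring
      _ ≤ (CH * mφ + CH * R * (q * omB)) * om t * √|x - y| := by gcongr
      _ ≤ _ := by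
        refine mul_le_mul_of_nonneg_right (mul_le_mul_of_nonneg_right ?_ o1.le) r
        linarith

end fix
end Coef
end

section
open MeasureTheory Set Filter Topology

lemma fubini_tri {T C : ℝ} {D : ℝ → ℝ → ℝ} (hC : 0 ≤ C)
    (hD : ∀ r s, 0 < s → s < r → r < T → ContinuousAt (fun p : ℝ × ℝ => D p.1 p.2) (r, s))
    (hb : ∀ r s, 0 < s → s < r → r < T → |D r s| ≤ C * (om (r - s) * om s))
    {t : ℝ} (ht : t < T) (ht0 : 0 < t) :
    ∫ s in Ioo 0 t, ∫ r in Ioo s t, D r s = ∫ r in Ioo 0 t, ∫ s in Ioo 0 r, D r s := by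
  set E : Set (ℝ × ℝ) := {p | 0 < p.2 ∧ p.2 < p.1 ∧ p.1 < t} with hE
  have hEo : IsOpen E := by
    rw [hE]
    exact (isOpen_lt continuous_const continuous_snd).inter
      ((isOpen_lt continuous_snd continuous_fst).inter (isOpen_lt continuous_fst continuous_const))
  set f : ℝ → ℝ := (Ioo 0 t).indicator om with hf
  have hfi : Integrable f := (integrable_indicator_iff measurableSet_Ioo).2 (om_integrableOn ht0.le)
  have hfn : ∀ x, 0 ≤ f x := fun x => indicator_nonneg (fun y hy => om_nonneg hy.1.le) x
  have hdom := (hfi.convolution_integrand (ContinuousLinearMap.mul ℝ ℝ) hfi).const_mul C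
  have hG : Integrable (Function.uncurry fun r s => E.indicator (fun p => D p.1 p.2) (r, s))
      (volume.prod volume) := by
    refine hdom.mono' ?_ (Eventually.of_forall ?_)
    · have : (Function.uncurry fun r s => E.indicator (fun p => D p.1 p.2) (r, s)) =
          E.indicator (fun p => D p.1 p.2) := by
        funext p; rfl
      rw [this, aestronglyMeasurable_indicator_iff hEo.measurableSet]
      refine ContinuousOn.aestronglyMeasurable ?_ hEo.measurableSet
      rintro ⟨r, s⟩ h
      exact (hD r s h.1 h.2.1 (h.2.2.trans ht)).continuousWithinAt
    · rintro ⟨r, s⟩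
      simp only [Function.uncurry, ContinuousLinearMap.mul_apply']
      by_cases h : (r, s) ∈ E
      · rw [indicator_of_mem h]
        have h' := h
        simp only [hE, mem_ofPred_eq] at h'
        have m1 : s ∈ Ioo 0 t := ⟨h'.1, h'.2.1.trans h'.2.2⟩
        have m2 : r - s ∈ Ioo 0 t := ⟨by linarith [h'.2.1], by linarith [h'.1, h'.2.2]⟩
        rw [hf, indicator_of_mem m1, indicator_of_mem m2]
        exact (hb r s h'.1 h'.2.1 (h'.2.2.trans ht)).trans (le_of_eq (by ring))
      · rw [indicator_of_notMem h, norm_zero]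
        exact mul_nonneg hC (mul_nonneg (hfn _) (hfn _))
  have hswap := integral_integral_swap hG
  have e1 : ∀ r, ∫ s, E.indicator (fun p => D p.1 p.2) (r, s) =
      (Ioo 0 t).indicator (fun r => ∫ s in Ioo 0 r, D r s) r := by
    intro r
    by_cases hr : r ∈ Ioo 0 t
    · rw [indicator_of_mem hr, ← integral_indicator measurableSet_Ioo]
      congr 1; funext s
      by_cases hs : s ∈ Ioo 0 r
      · rw [indicator_of_mem hs, indicator_of_mem (show (r, s) ∈ E from ⟨hs.1, hs.2, hr.2⟩)]
      · rw [indicator_of_notMem hs, indicator_of_notMem]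
        exact fun h => hs ⟨h.1, h.2.1⟩
    · rw [indicator_of_notMem hr]
      have : ∀ s, E.indicator (fun p => D p.1 p.2) (r, s) = 0 := fun s =>
        indicator_of_notMem (fun h => hr ⟨lt_trans h.1 h.2.1, h.2.2⟩) _
      simp [this]
  have e2 : ∀ s, ∫ r, E.indicator (fun p => D p.1 p.2) (r, s) =
      (Ioo 0 t).indicator (fun s => ∫ r in Ioo s t, D r s) s := by
    intro s
    by_cases hs : s ∈ Ioo 0 t
    · rw [indicator_of_mem hs, ← integral_indicator measurableSet_Ioo]
      congr 1; funext r
      by_cases hr : r ∈ Ioo s t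
      · rw [indicator_of_mem hr, indicator_of_mem (show (r, s) ∈ E from ⟨hs.1, hr.1, hr.2⟩)]
      · rw [indicator_of_notMem hr, indicator_of_notMem]
        exact fun h => hr ⟨h.2.1, h.2.2⟩
    · rw [indicator_of_notMem hs]
      have : ∀ r, E.indicator (fun p => D p.1 p.2) (r, s) = 0 := fun r =>
        indicator_of_notMem (fun h => hs ⟨h.1, lt_trans h.2.1 h.2.2⟩) _
      simp [this]
  simp only [e1, e2] at hswap
  rw [integral_indicator measurableSet_Ioo, integral_indicator measurableSet_Ioo] at hswap
  exact hswap.symm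

namespace Coef
variable (S : Coef)

/-- volume potential -/
noncomputable def IJ (j : ℕ) (ρ : ℝ → ℝ → ℝ) (t x : ℝ) : ℝ := ∫ s in Ioo 0 t, S.J j t s (ρ s) x

/-- singular part of the time derivative of the volume potential -/
noncomputable def ID (ρ : ℝ → ℝ → ℝ) (t x : ℝ) : ℝ := ∫ s in Ioo 0 t, S.Dk t s (ρ s) x

variable {T R : ℝ} {ρ : ℝ → ℝ → ℝ}

lemma JF_cont (j : ℕ) (h : Good T R ρ) (t x s : ℝ) (h0 : 0 < s) (h1 : s < t) (h2 : t < T) :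
    ContinuousAt (fun p : ℝ × ℝ × ℝ => S.J j p.1 p.2.2 (ρ p.2.2) p.2.1) (t, x, s) := by
  obtain ⟨e1, e2, e3⟩ := h.ev t x s h0 (h1.trans h2)
  exact S.J_cont j (t := fun p : ℝ × ℝ × ℝ => p.1) (s := fun p => p.2.2) (x := fun p => p.2.1)
    (by fun_prop) (by fun_prop) (by fun_prop) h1 e1 e2 e3

lemma DF_cont (h : Good T R ρ) (t x s : ℝ) (h0 : 0 < s) (h1 : s < t) (h2 : t < T) :
    ContinuousAt (fun p : ℝ × ℝ × ℝ => S.Dk p.1 p.2.2 (ρ p.2.2) p.2.1) (t, x, s) := by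
  obtain ⟨e1, e2, e3⟩ := h.ev t x s h0 (h1.trans h2)
  exact S.Dk_cont (t := fun p : ℝ × ℝ × ℝ => p.1) (s := fun p => p.2.2) (x := fun p => p.2.1)
    (by fun_prop) (by fun_prop) (by fun_prop) h1 e1 e2 e3

/-- bounds on potentials -/
lemma F_bounds (h : Good T R ρ)
    (hh : ∀ s, 0 < s → s < T → ∀ x y, |ρ s y - ρ s x| ≤ R * om s * √|x - y|) :
    ∃ C : ℝ, 0 ≤ C ∧ ∀ t x s, 0 < s → s < t → t < T →
      |S.J 0 t s (ρ s) x| ≤ C * om s ∧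
      |S.J 0 t s (ρ s) x| ≤ C * (om (t - s) * om s) ∧
      |S.J 1 t s (ρ s) x| ≤ C * (om (t - s) * om s) ∧
      |S.J 2 t s (ρ s) x| ≤ C * (om (t - s) * om s) ∧
      |S.Dk t s (ρ s) x| ≤ C * (om (t - s) * om s) := by
  obtain ⟨C, hC, hb⟩ := S.all_holder T
  have hR := h.R_nonneg
  refine ⟨C * R, by positivity, fun t x s h0 h1 h2 => ?_⟩
  have := hb t s x (R * om s) (ρ s) h1 (by linarith) (h.cont_y h0 (h1.trans h2))
    (fun y => h.bd s y h0 (h1.trans h2)) (hh s h0 (h1.trans h2))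
  obtain ⟨a1, a2, a3, a4, a5⟩ := this
  refine ⟨a1.trans (le_of_eq (by ring)), a2.trans (le_of_eq (by ring)),
    a3.trans (le_of_eq (by ring)), a4.trans (le_of_eq (by ring)), a5.trans (le_of_eq (by ring))⟩

lemma IJ_deriv_x (j : ℕ) (h : Good T R ρ) {C : ℝ}
    (hb0 : ∀ t x s, 0 < s → s < t → t < T → |S.J j t s (ρ s) x| ≤ C * (om (t - s) * om s))
    (hb1 : ∀ t x s, 0 < s → s < t → t < T → |S.J (j + 1) t s (ρ s) x| ≤ C * (om (t - s) * om s))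
    (t x : ℝ) (ht : 0 < t) (htT : t < T) :
    HasDerivAt (fun x => S.IJ j ρ t x) (S.IJ (j + 1) ρ t x) x := by
  unfold IJ
  refine (hasDerivAt_integral_of_dominated_loc_of_deriv_le
    (F := fun x s => S.J j t s (ρ s) x) (F' := fun x s => S.J (j + 1) t s (ρ s) x)
    (bound := fun s => C * (om (t - s) * om s)) (s := univ) univ_mem ?_ ?_ ?_ ?_ ?_ ?_).2
  · exact Eventually.of_forall fun x' =>
      (outer_integrable (F := fun t x s => S.J j t s (ρ s) x) (S.JF_cont j h) hb0 t x' ht htT).1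
  · exact outer_integrable (F := fun t x s => S.J j t s (ρ s) x) (S.JF_cont j h) hb0 t x ht htT
  · exact (outer_integrable (F := fun t x s => S.J (j + 1) t s (ρ s) x) (S.JF_cont (j + 1) h) hb1
      t x ht htT).1
  · filter_upwards [ae_restrict_mem measurableSet_Ioo] with s hs x' _
    exact hb1 t x' s hs.1 hs.2 htT
  · exact (omom_integrableOn ht).const_mul C
  · filter_upwards [ae_restrict_mem measurableSet_Ioo] with s hs x' _
    exact S.J_deriv_x j x' hs.2 (h.cont_y hs.1 (hs.2.trans htT))
      (fun y => h.bd s y hs.1 (hs.2.trans htT))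

lemma J0_ftc (h : Good T R ρ) {C : ℝ}
    (hb : ∀ t x s, 0 < s → s < t → t < T → |S.Dk t s (ρ s) x| ≤ C * (om (t - s) * om s))
    (t x s : ℝ) (hs : 0 < s) (hst : s < t) (htT : t < T) :
    S.J 0 t s (ρ s) x = ρ s x + ∫ r in Ioo s t, S.Dk r s (ρ s) x := by
  have hc := h.cont_y hs (hst.trans htT)
  have hm := fun y => h.bd s y hs (hst.trans htT)
  have hIntg : IntervalIntegrable (fun r => S.Dk r s (ρ s) x) volume s t := by
    rw [intervalIntegrable_iff_integrableOn_Ioo_of_le hst.le]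
    have hi : IntegrableOn (fun r => C * (om (r - s) * om s)) (Ioo s t) := by
      have := (om_intervalIntegrable (s - s) (t - s)).comp_sub_right s
      simp only [sub_add_cancel] at this
      rw [intervalIntegrable_iff_integrableOn_Ioo_of_le hst.le] at this
      exact (this.mul_const _).const_mul _
    refine hi.mono' ?_ ?_
    · refine ContinuousOn.aestronglyMeasurable ?_ measurableSet_Ioo
      intro r hr
      exact (ContinuousAt.comp (f := fun r => ((r, x, s) : ℝ × ℝ × ℝ))
        (S.DF_cont h r x s hs hr.1 (hr.2.trans htT)) (by fun_prop)).continuousWithinAt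
    · filter_upwards [ae_restrict_mem measurableSet_Ioo] with r hr
      exact hb r x s hs hr.1 (hr.2.trans htT)
  have := intervalIntegral.integral_eq_sub_of_hasDerivAt_of_tendsto hst
    (f := fun r => S.J 0 r s (ρ s) x) (f' := fun r => S.Dk r s (ρ s) x)
    (fa := ρ s x) (fb := S.J 0 t s (ρ s) x)
    (fun r hr => S.J_deriv_t x hr.1 hc hm) hIntg ?_ ?_
  · rw [intervalIntegral.integral_of_le hst.le, integral_Ioc_eq_integral_Ioo] at this
    rw [this]; ring
  · have h1 := S.J0_tendsto s x hc hm
    refine h1.comp (f := fun r : ℝ => ((r, x) : ℝ × ℝ)) ?_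
    refine tendsto_nhdsWithin_iff.2 ⟨?_, ?_⟩
    · exact (Continuous.tendsto (by fun_prop : Continuous fun r : ℝ => ((r, x) : ℝ × ℝ)) s).mono_left
        nhdsWithin_le_nhds
    · filter_upwards [self_mem_nhdsWithin] with r hr
      exact ⟨hr, mem_univ _⟩
  · exact ((S.J_deriv_t x hst hc hm).continuousAt.tendsto).mono_left nhdsWithin_le_nhds

lemma IJ0_deriv_t (h : Good T R ρ) {C : ℝ} (hC : 0 ≤ C)
    (hbD : ∀ t x s, 0 < s → s < t → t < T → |S.Dk t s (ρ s) x| ≤ C * (om (t - s) * om s))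
    (hb0 : ∀ t x s, 0 < s → s < t → t < T → |S.J 0 t s (ρ s) x| ≤ C * (om (t - s) * om s))
    (t x : ℝ) (ht : 0 < t) (htT : t < T) :
    HasDerivAt (fun t => S.IJ 0 ρ t x) (ρ t x + S.ID ρ t x) t := by
  have hR := h.R_nonneg
  have hB := omB_nonneg
  have hIDc : ∀ t, 0 < t → t < T → ContinuousAt (fun t => S.ID ρ t x) t := by
    intro t h0 h1
    exact ContinuousAt.comp (f := fun r : ℝ => ((r, x) : ℝ × ℝ))
      (outer_cont (F := fun t x s => S.Dk t s (ρ s) x) hC (S.DF_cont h) hbD t x h0 h1) (by fun_prop)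
  have hρc : ∀ t, 0 < t → t < T → ContinuousAt (fun t => ρ t x) t := by
    intro t h0 h1
    exact ContinuousAt.comp (f := fun r : ℝ => ((r, x) : ℝ × ℝ)) (h.cont t x h0 h1) (by fun_prop)
  have hρi : ∀ t, 0 < t → t < T → IntegrableOn (fun r => ρ r x) (Ioo 0 t) := by
    intro t h0 h1
    refine ((om_integrableOn h0.le).const_mul R).mono' ?_ ?_
    · exact ContinuousOn.aestronglyMeasurable
        (fun r hr => (hρc r hr.1 (hr.2.trans h1)).continuousWithinAt) measurableSet_Ioo
    · filter_upwards [ae_restrict_mem measurableSet_Ioo] with r hr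
      exact h.bd r x hr.1 (hr.2.trans h1)
  have hIDi : ∀ t, 0 < t → t < T → IntegrableOn (fun r => S.ID ρ r x) (Ioo 0 t) := by
    intro t h0 h1
    refine ((om_integrableOn h0.le).const_mul (C * (T ^ (1 / 4 : ℝ) * omB))).mono' ?_ ?_
    · exact ContinuousOn.aestronglyMeasurable
        (fun r hr => (hIDc r hr.1 (hr.2.trans h1)).continuousWithinAt) measurableSet_Ioo
    · filter_upwards [ae_restrict_mem measurableSet_Ioo] with r hr
      have := outer_bound (F := fun t x s => S.Dk t s (ρ s) x) hbD r x hr.1 (hr.2.trans h1)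
      refine this.trans ?_
      have o := t_om hr.1 (hr.2.trans h1).le
      have o1 := om_nonneg hr.1.le
      calc _ = C * ((r * om r) * omB) * om r := by ring
        _ ≤ _ := by gcongr
  have key : ∀ t, 0 < t → t < T → S.IJ 0 ρ t x = ∫ r in (0:ℝ)..t, (ρ r x + S.ID ρ r x) := by
    intro t h0 h1
    rw [intervalIntegral.integral_of_le h0.le, integral_Ioc_eq_integral_Ioo,
      integral_add (hρi t h0 h1) (hIDi t h0 h1)]
    have fub := fubini_tri (D := fun r s => S.Dk r s (ρ s) x) hC
      (fun r s a1 a2 a3 => ContinuousAt.comp (f := fun p : ℝ × ℝ => ((p.1, x, p.2) : ℝ × ℝ × ℝ))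
        (x := (r, s)) (S.DF_cont h r x s a1 a2 a3) (by fun_prop))
      (fun r s a1 a2 a3 => hbD r x s a1 a2 a3) h1 h0
    unfold ID
    rw [← fub]
    have e : ∀ s ∈ Ioo 0 t, S.J 0 t s (ρ s) x - ρ s x = ∫ r in Ioo s t, S.Dk r s (ρ s) x := by
      intro s hs
      rw [S.J0_ftc h hbD t x s hs.1 hs.2 h1]; ring
    rw [← setIntegral_congr_fun measurableSet_Ioo e, integral_sub _ (hρi t h0 h1)]
    · unfold IJ; ring
    · exact outer_integrable (F := fun t x s => S.J 0 t s (ρ s) x) (S.JF_cont 0 h) hb0 t x h0 h1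
  have hd : HasDerivAt (fun t => ∫ r in (0:ℝ)..t, (ρ r x + S.ID ρ r x)) (ρ t x + S.ID ρ t x) t := by
    refine intervalIntegral.integral_hasDerivAt_right ?_ ?_ ?_
    · rw [intervalIntegrable_iff_integrableOn_Ioo_of_le ht.le]
      exact (hρi t ht htT).add (hIDi t ht htT)
    · exact ContinuousOn.stronglyMeasurableAtFilter isOpen_Ioo
        (fun r hr => ((hρc r hr.1 hr.2).add (hIDc r hr.1 hr.2)).continuousWithinAt) t
        (⟨ht, htT⟩ : t ∈ Ioo 0 T)
    · exact (hρc t ht htT).add (hIDc t ht htT)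
  refine hd.congr_of_eventuallyEq ?_
  filter_upwards [isOpen_Ioo.mem_nhds (⟨ht, htT⟩ : t ∈ Ioo 0 T)] with r hr
  exact key r hr.1 hr.2

end Coef
end

section
open MeasureTheory Set Filter Topology

lemma t_om_eq {t : ℝ} (h : 0 < t) : t * om t = √√t := by
  rw [← om_sqrt h, Real.sq_sqrt h.le]
  field_simp

namespace Coef
variable (S : Coef)

theorem core {T : ℝ} (hT : 0 < T) {φ : ℝ → ℝ} (hφ : Continuous φ) {mφ : ℝ} (hm : ∀ y, |φ y| ≤ mφ) :
    ∃ u ut ux uxx : ℝ → ℝ → ℝ, ∃ M : ℝ,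
      (∀ x, u 0 x = φ x) ∧
      ContinuousOn (fun p : ℝ × ℝ => u p.1 p.2) (Ico 0 T ×ˢ univ) ∧
      (∀ t x, 0 ≤ t → t < T → |u t x| ≤ M) ∧
      (∀ t x, 0 < t → t < T →
        ContinuousAt (fun p : ℝ × ℝ => ut p.1 p.2) (t, x) ∧
        ContinuousAt (fun p : ℝ × ℝ => ux p.1 p.2) (t, x) ∧
        ContinuousAt (fun p : ℝ × ℝ => uxx p.1 p.2) (t, x) ∧
        HasDerivAt (fun t => u t x) (ut t x) t ∧
        HasDerivAt (fun x => u t x) (ux t x) x ∧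
        HasDerivAt (fun x => ux t x) (uxx t x) x ∧
        ut t x = 1 / 2 * S.a t x * uxx t x + S.b t x * ux t x + S.c t x * u t x) := by
  have hm0 : 0 ≤ mφ := (abs_nonneg _).trans (hm 0)
  obtain ⟨R, ρ, hg, hh, heq⟩ := S.exists_rho hT hφ hm
  obtain ⟨C, hC, hb⟩ := S.F_bounds hg hh
  obtain ⟨C0, hC0, h0⟩ := S.J_bd 0
  have hb0 := fun t x s a1 a2 a3 => (hb t x s a1 a2 a3).2.1
  have hb1 := fun t x s a1 a2 a3 => (hb t x s a1 a2 a3).2.2.1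
  have hb2 := fun t x s a1 a2 a3 => (hb t x s a1 a2 a3).2.2.2.1
  have hbD := fun t x s a1 a2 a3 => (hb t x s a1 a2 a3).2.2.2.2
  set B := ∫ θ in Ioo (0:ℝ) 1, om θ with hB
  have hB0 : 0 ≤ B := setIntegral_nonneg measurableSet_Ioo fun θ hθ => om_nonneg hθ.1.le
  have hI0 : ∀ t x, 0 < t → t < T → |S.IJ 0 ρ t x| ≤ C * (√√t * B) := by
    intro t x a1 a2
    have := norm_integral_le_of_norm_le (f := fun s => S.J 0 t s (ρ s) x)
      ((om_integrableOn a1.le).const_mul C)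
      (by filter_upwards [ae_restrict_mem measurableSet_Ioo] with s hs
          exact (hb t x s hs.1 hs.2 a2).1)
    rwa [integral_const_mul, om_integral a1, t_om_eq a1] at this
  have hJc : ∀ j t x, 0 < t → ContinuousAt (fun p : ℝ × ℝ => S.J j p.1 0 φ p.2) (t, x) := by
    intro j t x a1
    exact S.J_cont j (X := ℝ × ℝ) (t := fun p => p.1) (s := fun _ => 0) (x := fun p => p.2)
            (Ψ := fun _ => φ) (by fun_prop) (by fun_prop) (by fun_prop) a1
            (Eventually.of_forall fun _ => hm) (Eventually.of_forall fun _ => hφ)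
            (fun y => continuousAt_const)
  have hDc : ∀ t x, 0 < t → ContinuousAt (fun p : ℝ × ℝ => S.Dk p.1 0 φ p.2) (t, x) := by
    intro t x a1
    exact S.Dk_cont (X := ℝ × ℝ) (t := fun p => p.1) (s := fun _ => 0) (x := fun p => p.2)
            (Ψ := fun _ => φ) (by fun_prop) (by fun_prop) (by fun_prop) a1
            (Eventually.of_forall fun _ => hm) (Eventually.of_forall fun _ => hφ)
            (fun y => continuousAt_const)
  have hIc0 := fun t x a1 a2 => outer_cont (F := fun t x s => S.J 0 t s (ρ s) x) hC (S.JF_cont 0 hg) hb0 t x a1 a2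
  have hIc1 := fun t x a1 a2 => outer_cont (F := fun t x s => S.J 1 t s (ρ s) x) hC (S.JF_cont 1 hg) hb1 t x a1 a2
  have hIc2 := fun t x a1 a2 => outer_cont (F := fun t x s => S.J 2 t s (ρ s) x) hC (S.JF_cont 2 hg) hb2 t x a1 a2
  have hIcD := fun t x a1 a2 => outer_cont (F := fun t x s => S.Dk t s (ρ s) x) hC (S.DF_cont hg) hbD t x a1 a2
  set w : ℝ → ℝ → ℝ := fun t x => if 0 < t then S.J 0 t 0 φ x else φ x with hw
  set v : ℝ → ℝ → ℝ := fun t x => if 0 < t then S.IJ 0 ρ t x else 0 with hv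
  have hpos : ∀ t x, 0 < t → w t x + v t x = S.J 0 t 0 φ x + S.IJ 0 ρ t x := by
    intro t x a1
    simp only [hw, hv, if_pos a1]
  refine ⟨fun t x => w t x + v t x, fun t x => S.Dk t 0 φ x + (ρ t x + S.ID ρ t x),
    fun t x => S.J 1 t 0 φ x + S.IJ 1 ρ t x, fun t x => S.J 2 t 0 φ x + S.IJ 2 ρ t x,
    (C0 + 1) * mφ + C * (√√T * B), ?_, ?_, ?_, ?_⟩
  · intro x; simp [hw, hv]
  · rintro ⟨t, x⟩ ⟨ht, -⟩
    rcases ht.1.eq_or_lt with h | h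
    · simp only at h
      subst h
      refine ContinuousWithinAt.add ?_ ?_
      · have hsub : (Ico 0 T ×ˢ univ : Set (ℝ × ℝ)) ⊆ (Ioi 0 ×ˢ univ) ∪ ({0} ×ˢ univ) := by
          rintro ⟨t, x⟩ ⟨ht, -⟩
          rcases ht.1.eq_or_lt with h | h
          · exact Or.inr ⟨h.symm, mem_univ _⟩
          · exact Or.inl ⟨h, mem_univ _⟩
        refine ContinuousWithinAt.mono (ContinuousWithinAt.union ?_ ?_) hsub
        · have := S.J0_tendsto 0 x hφ hm
          unfold ContinuousWithinAt
          have e : w 0 x = φ x := by simp [hw]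
          simp only [e]
          refine this.congr' ?_
          filter_upwards [self_mem_nhdsWithin] with p hp
          have : 0 < p.1 := hp.1
          simp only [hw, if_pos this]
        · have : ContinuousWithinAt (fun p : ℝ × ℝ => φ p.2) ({0} ×ˢ univ) (0, x) :=
            (by fun_prop : Continuous fun p : ℝ × ℝ => φ p.2).continuousWithinAt
          refine this.congr ?_ ?_
          · rintro ⟨t, y⟩ ⟨ht, -⟩
            have : t = 0 := ht
            simp [hw, this]
          · simp [hw]
      · unfold ContinuousWithinAt
        have e : v 0 x = 0 := by simp [hv]
        simp only [e]
        have hlim : Tendsto (fun p : ℝ × ℝ => C * (√√p.1 * B)) (𝓝[Ico 0 T ×ˢ univ] (0, x)) (𝓝 0) := by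
          have : Continuous (fun p : ℝ × ℝ => C * (√√p.1 * B)) := by fun_prop
          have h2 := this.tendsto (0, x)
          simp only [Real.sqrt_zero, zero_mul, mul_zero] at h2
          exact h2.mono_left nhdsWithin_le_nhds
        refine squeeze_zero_norm' ?_ hlim
        filter_upwards [self_mem_nhdsWithin] with p hp
        rcases hp.1.1.eq_or_lt with h | h
        · simp [hv, ← h]
        · simp only [hv, if_pos h]
          exact hI0 p.1 p.2 h hp.1.2
    · have h' : 0 < t := h
      have : ContinuousAt (fun p : ℝ × ℝ => S.J 0 p.1 0 φ p.2 + S.IJ 0 ρ p.1 p.2) (t, x) :=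
        (hJc 0 t x h').add (hIc0 t x h' ht.2)
      refine (this.congr ?_).continuousWithinAt
      have e1 : ∀ᶠ p : ℝ × ℝ in 𝓝 (t, x), 0 < p.1 :=
        ContinuousAt.eventually_lt continuousAt_const (by fun_prop) h'
      filter_upwards [e1] with p hp
      exact (hpos p.1 p.2 hp).symm
  · intro t x a1 a2
    refine (abs_add_le _ _).trans (add_le_add ?_ ?_)
    · by_cases h : 0 < t
      · simp only [hw, if_pos h]
        have := h0 t 0 x mφ φ h hm
        simp only [pow_zero, div_one] at this
        linarith
      · simp only [hw, if_neg h]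
        nlinarith [hm x]
    · by_cases h : 0 < t
      · simp only [hv, if_pos h]
        refine (hI0 t x h a2).trans ?_
        gcongr
      · simp only [hv, if_neg h, abs_zero]
        positivity
  · intro t x a1 a2
    refine ⟨?_, ?_, ?_, ?_, ?_, ?_, ?_⟩
    · exact (hDc t x a1).add ((hg.cont t x a1 a2).add (hIcD t x a1 a2))
    · exact (hJc 1 t x a1).add (hIc1 t x a1 a2)
    · exact (hJc 2 t x a1).add (hIc2 t x a1 a2)
    · have := (S.J_deriv_t x a1 hφ hm).add (S.IJ0_deriv_t hg hC hbD hb0 t x a1 a2)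
      refine this.congr_of_eventuallyEq ?_
      filter_upwards [eventually_gt_nhds a1] with r hr
      exact hpos r x hr
    · have := (S.J_deriv_x 0 x a1 hφ hm).add (S.IJ_deriv_x 0 hg hb0 hb1 t x a1 a2)
      refine this.congr_of_eventuallyEq (Eventually.of_forall fun y => hpos t y a1)
    · exact (S.J_deriv_x 1 x a1 hφ hm).add (S.IJ_deriv_x 1 hg hb1 hb2 t x a1 a2)
    · have hK : ∀ s (ψ : ℝ → ℝ) m, s < t → Continuous ψ → (∀ y, |ψ y| ≤ m) → S.Kk t s ψ x =
          1 / 2 * S.a t x * S.J 2 t s ψ x + S.b t x * S.J 1 t s ψ x + S.c t x * S.J 0 t s ψ x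
          - S.Dk t s ψ x := by
        intro s ψ m hst hc hm
        rw [S.Dk_eq x hst hc hm]; unfold Kk; ring
      have i0 := outer_integrable (F := fun t x s => S.J 0 t s (ρ s) x) (S.JF_cont 0 hg) hb0 t x a1 a2
      have i1 := outer_integrable (F := fun t x s => S.J 1 t s (ρ s) x) (S.JF_cont 1 hg) hb1 t x a1 a2
      have i2 := outer_integrable (F := fun t x s => S.J 2 t s (ρ s) x) (S.JF_cont 2 hg) hb2 t x a1 a2
      have iD := outer_integrable (F := fun t x s => S.Dk t s (ρ s) x) (S.DF_cont hg) hbD t x a1 a2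
      have hIntg : ∫ s in Ioo 0 t, S.Kk t s (ρ s) x = 1 / 2 * S.a t x * S.IJ 2 ρ t x
          + S.b t x * S.IJ 1 ρ t x + S.c t x * S.IJ 0 ρ t x - S.ID ρ t x := by
        have e : ∀ s ∈ Ioo 0 t, S.Kk t s (ρ s) x = 1 / 2 * S.a t x * S.J 2 t s (ρ s) x
          + S.b t x * S.J 1 t s (ρ s) x + S.c t x * S.J 0 t s (ρ s) x - S.Dk t s (ρ s) x := by
          intro s hs
          exact hK s (ρ s) _ hs.2 (hg.cont_y hs.1 (hs.2.trans a2))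
            (fun y => hg.bd s y hs.1 (hs.2.trans a2))
        rw [setIntegral_congr_fun measurableSet_Ioo e, integral_sub, integral_add, integral_add,
          integral_const_mul, integral_const_mul, integral_const_mul]
        · rfl
        · exact i2.const_mul _
        · exact i1.const_mul _
        · exact (i2.const_mul _).add (i1.const_mul _)
        · exact i0.const_mul _
        · exact ((i2.const_mul _).add (i1.const_mul _)).add (i0.const_mul _)
        · exact iD
      simp only [hpos t x a1]
      rw [heq t x a1 a2, hIntg, hK 0 φ mφ a1 hφ hm]
      ring

end Coef
end

section
open MeasureTheory Set Filter Topology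

lemma tanh_lip (x y : ℝ) : |Real.tanh x - Real.tanh y| ≤ |x - y| := by
  have hd : ∀ z : ℝ, HasDerivAt Real.tanh (1 - Real.tanh z ^ 2) z := by
    intro z
    have hc : Real.cosh z ≠ 0 := (Real.cosh_pos z).ne'
    have h := (Real.hasDerivAt_sinh z).div (Real.hasDerivAt_cosh z) hc
    have e : Real.tanh = fun z => Real.sinh z / Real.cosh z := by
      funext z; exact Real.tanh_eq_sinh_div_cosh z
    rw [e]
    refine h.congr_deriv ?_
    field_simp
  have h := Convex.norm_image_sub_le_of_norm_hasDerivWithin_le (f := Real.tanh) (C := 1)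
    (f' := fun z => 1 - Real.tanh z ^ 2) (s := univ) (x := y) (y := x)
    (fun z _ => (hd z).hasDerivWithinAt)
    (fun z _ => by
      rw [Real.norm_eq_abs, abs_le]
      have := Real.tanh_sq_lt_one z
      constructor <;> nlinarith [sq_nonneg (Real.tanh z)]) convex_univ (mem_univ _) (mem_univ _)
  simpa using h

lemma continuous_tanh' : Continuous Real.tanh := by
  have e : Real.tanh = fun z => Real.sinh z / Real.cosh z := by
    funext z; exact Real.tanh_eq_sinh_div_cosh z
  rw [e]
  exact Real.continuous_sinh.div Real.continuous_cosh (fun z => (Real.cosh_pos z).ne')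

/-- bounded, and Lipschitz in space uniformly in time -/
def BL (f : ℝ → ℝ → ℝ) : Prop :=
  ∃ M L : ℝ, 0 ≤ M ∧ 0 ≤ L ∧ (∀ t x, |f t x| ≤ M) ∧ ∀ t x y, |f t x - f t y| ≤ L * |x - y|

lemma BL.add {f g : ℝ → ℝ → ℝ} (hf : BL f) (hg : BL g) : BL (fun t x => f t x + g t x) := by
  obtain ⟨M, L, hM, hL, h1, h2⟩ := hf
  obtain ⟨M', L', hM', hL', h1', h2'⟩ := hg
  refine ⟨M + M', L + L', by positivity, by positivity, fun t x => ?_, fun t x y => ?_⟩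
  · exact (abs_add_le _ _).trans (add_le_add (h1 t x) (h1' t x))
  · have e : f t x + g t x - (f t y + g t y) = (f t x - f t y) + (g t x - g t y) := by ring
    rw [e, add_mul]
    exact (abs_add_le _ _).trans (add_le_add (h2 t x y) (h2' t x y))

lemma BL.mul {f g : ℝ → ℝ → ℝ} (hf : BL f) (hg : BL g) : BL (fun t x => f t x * g t x) := by
  obtain ⟨M, L, hM, hL, h1, h2⟩ := hf
  obtain ⟨M', L', hM', hL', h1', h2'⟩ := hg
  refine ⟨M * M', L * M' + M * L', by positivity, by positivity, fun t x => ?_, fun t x y => ?_⟩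
  · rw [abs_mul]; exact mul_le_mul (h1 t x) (h1' t x) (abs_nonneg _) hM
  · have e : f t x * g t x - f t y * g t y
      = (f t x - f t y) * g t x + f t y * (g t x - g t y) := by ring
    rw [e]
    refine (abs_add_le _ _).trans ?_
    rw [abs_mul, abs_mul]
    have a1 : |f t x - f t y| * |g t x| ≤ (L * |x - y|) * M' :=
      mul_le_mul (h2 t x y) (h1' t x) (abs_nonneg _) (by positivity)
    have a2 : |f t y| * |g t x - g t y| ≤ M * (L' * |x - y|) :=
      mul_le_mul (h1 t y) (h2' t x y) (abs_nonneg _) hM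
    nlinarith

lemma BL.time {f : ℝ → ℝ} {M : ℝ} (h : ∀ t, |f t| ≤ M) : BL (fun t _ => f t) :=
  ⟨M, 0, (abs_nonneg _).trans (h 0), le_rfl, fun t _ => h t, fun t x y => by simp⟩

lemma chain2 {u ut ux : ℝ → ℝ → ℝ} {T : ℝ}
    (h : ∀ t x, 0 < t → t < T → ContinuousAt (fun p : ℝ × ℝ => ut p.1 p.2) (t, x) ∧
      ContinuousAt (fun p : ℝ × ℝ => ux p.1 p.2) (t, x) ∧
      HasDerivAt (fun t => u t x) (ut t x) t ∧ HasDerivAt (fun x => u t x) (ux t x) x)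
    {g y : ℝ → ℝ} {g' y' s : ℝ} (hg : HasDerivAt g g' s) (hy : HasDerivAt y y' s)
    (h0 : 0 < g s) (hT : g s < T) :
    HasDerivAt (fun s => u (g s) (y s)) (ut (g s) (y s) * g' + ux (g s) (y s) * y') s := by
  have ho : ∀ᶠ v : ℝ × ℝ in 𝓝 (g s, y s), 0 < v.1 ∧ v.1 < T := by
    have : ∀ᶠ v : ℝ × ℝ in 𝓝 (g s, y s), v.1 ∈ Ioo 0 T :=
      continuous_fst.continuousAt (Ioo_mem_nhds h0 hT)
    exact this
  have hs := hasStrictFDerivAt_uncurry_coprod (𝕜 := ℝ) (u := (g s, y s)) (f := u)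
    (f₁ := fun t x => ContinuousLinearMap.toSpanSingleton ℝ (ut t x))
    (f₂ := fun t x => ContinuousLinearMap.toSpanSingleton ℝ (ux t x))
    (ho.mono fun v hv => (h v.1 v.2 hv.1 hv.2).2.2.1.hasFDerivAt)
    (ho.mono fun v hv => (h v.1 v.2 hv.1 hv.2).2.2.2.hasFDerivAt)
    (by
      have := (h _ (y s) h0 hT).1
      exact ((ContinuousLinearMap.toSpanSingletonCLE (𝕜 := ℝ) (E := ℝ)).continuous.continuousAt).comp this)
    (by
      have := (h _ (y s) h0 hT).2.1
      exact ((ContinuousLinearMap.toSpanSingletonCLE (𝕜 := ℝ) (E := ℝ)).continuous.continuousAt).comp this)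
  have := hs.hasFDerivAt.comp_hasDerivAt s (hg.prodMk hy)
  refine this.congr_deriv ?_
  simp [Function.HasUncurry.uncurry, mul_comm]

/-- the integrating factors -/
lemma factors {A B : ℝ → ℝ} (hA : Continuous A) (hB : Continuous B) (τ : ℝ) :
    ∃ e d p : ℝ → ℝ, e τ = 1 ∧ d τ = 0 ∧ p τ = 0 ∧ (∀ t, 0 < e t) ∧
      (∀ t, HasDerivAt e (-(B t * e t)) t) ∧ (∀ t, HasDerivAt d (-(A t * e t)) t) ∧
      (∀ t, HasDerivAt p (1 - B t * p t) t) := by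
  let e : ℝ → ℝ := fun t => Real.exp (-∫ s in τ..t, B s)
  have he0 : ∀ t, 0 < e t := fun t => Real.exp_pos _
  have hI : ∀ (g : ℝ → ℝ), Continuous g → ∀ t, HasDerivAt (fun t => ∫ s in τ..t, g s) (g t) t :=
    fun g hg t => intervalIntegral.integral_hasDerivAt_right (hg.intervalIntegrable _ _)
      (hg.stronglyMeasurableAtFilter _ _) hg.continuousAt
  have he : ∀ t, HasDerivAt e (-(B t * e t)) t := by
    intro t
    refine ((hI B hB t).neg.exp).congr_deriv ?_
    simp only [e, Pi.neg_apply]; ring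
  have hec : Continuous e := continuous_iff_continuousAt.2 fun t => (he t).continuousAt
  refine ⟨e, fun t => -∫ s in τ..t, A s * e s, fun t => e t * ∫ s in τ..t, (e s)⁻¹,
    by simp [e], by simp, by simp, he0, he, fun t => (hI _ (hA.mul hec) t).neg, fun t => ?_⟩
  refine ((he t).mul (hI _ (hec.inv₀ fun t => (he0 t).ne') t)).congr_deriv ?_
  have := (he0 t).ne'
  simp only [Pi.inv_apply]
  rw [mul_inv_cancel₀ this]; ring
end

section
open MeasureTheory Set Filter Topology

lemma exists_bd {g : ℝ → ℝ} (hg : Continuous g) (a b : ℝ) :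
    ∃ M : ℝ, 0 < M ∧ ∀ t ∈ Icc a b, |g t| ≤ M := by
  obtain ⟨M, hM⟩ := (isCompact_Icc (a := a) (b := b)).exists_bound_of_continuousOn hg.continuousOn
  exact ⟨|M| + 1, by positivity, fun t ht => (hM t ht).trans ((le_abs_self M).trans (by linarith))⟩

lemma exists_coef {A e d p : ℝ → ℝ} {Sg : ℝ → ℝ → ℝ} {τ₀ τ k Cs K lam : ℝ} (hττ : τ₀ < τ)
    (hA : Continuous A) (he : Continuous e) (hd : Continuous d) (hp : Continuous p)
    (he0 : ∀ t, 0 < e t) (hS : Continuous (fun q : ℝ × ℝ => Sg q.1 q.2))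
    (hSb : ∀ t x, |Sg t x| ≤ Cs) (hK : 0 ≤ K) (hSl : ∀ t x y, |Sg t x - Sg t y| ≤ K * |x - y|)
    (hlam : 0 < lam) (hSlb : ∀ t x, lam ≤ Sg t x ^ 2) :
    ∃ S : Coef, ∀ t ∈ Icc τ₀ τ, ∀ x : ℝ,
      S.a (τ - t) (e t * x + d t) = Sg t x ^ 2 * e t ^ 2 ∧
      S.b (τ - t) (e t * x + d t) = Sg t x ^ 2 *
        (p t * e t + e t ^ 2 * k * Real.tanh (k * (e t * x + d t))) ∧
      S.c (τ - t) (e t * x + d t) = A t * p t + 1 / 2 * Sg t x ^ 2 *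
        (p t ^ 2 + 2 * p t * e t * k * Real.tanh (k * (e t * x + d t)) + e t ^ 2 * k ^ 2) := by
  let s : ℝ → ℝ := fun t => max (τ₀ - 1) (min τ (τ - t))
  have hs : Continuous s := by fun_prop
  have hsm : ∀ t, s t ∈ Icc (τ₀ - 1) τ := fun t =>
    ⟨le_max_left _ _, max_le (by linarith) (min_le_left _ _)⟩
  have hst : ∀ t ∈ Icc τ₀ τ, s (τ - t) = t := by
    intro t ht
    simp only [s]
    rw [sub_sub_cancel, min_eq_right ht.2, max_eq_right (by linarith [ht.1])]
  have hei : Continuous fun t => (e t)⁻¹ := he.inv₀ fun t => (he0 t).ne'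
  have tm : ∀ g : ℝ → ℝ, Continuous g → BL (fun t _ => g (s t)) := by
    intro g hg
    obtain ⟨M, -, hM⟩ := exists_bd hg (τ₀ - 1) τ
    exact BL.time (f := fun t => g (s t)) fun t => hM _ (hsm t)
  have ei_pos : ∀ t, 0 < (e t)⁻¹ := fun t => inv_pos.2 (he0 t)
  obtain ⟨Ei, hEi, hEi'⟩ := exists_bd hei (τ₀ - 1) τ
  let X : ℝ → ℝ → ℝ := fun t y => (y - d (s t)) * (e (s t))⁻¹
  have hX : Continuous (fun q : ℝ × ℝ => X q.1 q.2) := by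
    have h1 : Continuous fun q : ℝ × ℝ => d (s q.1) := by fun_prop
    have h2 : Continuous fun q : ℝ × ℝ => (e (s q.1))⁻¹ := hei.comp (hs.comp continuous_fst)
    exact (continuous_snd.sub h1).mul h2
  let G : ℝ → ℝ → ℝ := fun t y => Sg (s t) (X t y)
  have hG : Continuous (fun q : ℝ × ℝ => G q.1 q.2) :=
    hS.comp ((hs.comp continuous_fst).prodMk hX)
  have hGB : BL G := by
    refine ⟨Cs, K * Ei, (abs_nonneg _).trans (hSb 0 0), by positivity, fun t y => hSb _ _,
      fun t x y => (hSl _ _ _).trans ?_⟩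
    have e1 : X t x - X t y = (x - y) * (e (s t))⁻¹ := by simp only [X]; ring
    rw [e1, abs_mul, mul_assoc, mul_comm Ei]
    gcongr
    exact hEi' _ (hsm t)
  have hth : BL (fun _ y => Real.tanh (k * y)) := by
    refine ⟨1, |k|, by norm_num, abs_nonneg _, fun t x => (Real.abs_tanh_lt_one _).le,
      fun t x y => (tanh_lip _ _).trans ?_⟩
    rw [← mul_sub, abs_mul]
  have hthc : Continuous (fun q : ℝ × ℝ => Real.tanh (k * q.2)) :=
    continuous_tanh'.comp (continuous_const.mul continuous_snd)
  have cm : ∀ g : ℝ → ℝ, Continuous g → Continuous (fun q : ℝ × ℝ => g (s q.1)) :=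
    fun g hg => hg.comp (hs.comp continuous_fst)
  have hAc := cm A hA
  have hec := cm e he
  have hpc := cm p hp
  have hG2 : BL (fun t y => G t y ^ 2) := by
    simpa only [pow_two] using hGB.mul hGB
  let a : ℝ → ℝ → ℝ := fun t y => G t y ^ 2 * e (s t) ^ 2
  let b : ℝ → ℝ → ℝ := fun t y => G t y ^ 2 *
    (p (s t) * e (s t) + e (s t) ^ 2 * k * Real.tanh (k * y))
  let c : ℝ → ℝ → ℝ := fun t y => A (s t) * p (s t) + 1 / 2 * G t y ^ 2 *
    (p (s t) ^ 2 + 2 * p (s t) * e (s t) * k * Real.tanh (k * y) + e (s t) ^ 2 * k ^ 2)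
  have ha : BL a := hG2.mul (tm (fun t => e t ^ 2) (by fun_prop))
  have hb : BL b := hG2.mul ((tm (fun t => p t * e t) (by fun_prop)).add
    ((tm (fun t => e t ^ 2 * k) (by fun_prop)).mul hth))
  have hc : BL c := (tm (fun t => A t * p t) (by fun_prop)).add
    (((tm (fun _ => 1 / 2) (by fun_prop)).mul hG2).mul
      (((tm (fun t => p t ^ 2) (by fun_prop)).add
      ((tm (fun t => 2 * p t * e t * k) (by fun_prop)).mul hth)).add
      (tm (fun t => e t ^ 2 * k ^ 2) (by fun_prop))))
  obtain ⟨Ma, La, hMa, hLa, a1, a2⟩ := ha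
  obtain ⟨Mb, Lb, hMb, hLb, b1, b2⟩ := hb
  obtain ⟨Mc, Lc, hMc, hLc, c1, c2⟩ := hc
  have up : ∀ {z : ℝ} {L' : ℝ} {x y : ℝ}, z ≤ L' * |x - y| → L' ≤ La + Lb + Lc + 1 →
      z ≤ (La + Lb + Lc + 1) * |x - y| := fun h1 h2 =>
    h1.trans (mul_le_mul_of_nonneg_right h2 (abs_nonneg _))
  let S : Coef :=
    { a := a, b := b, c := c
      lam := lam * (Ei⁻¹) ^ 2
      Lam := Ma + Mb + Mc + 1
      L := La + Lb + Lc + 1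
      lam_pos := by positivity
      Lam_pos := by positivity
      L_pos := by positivity
      ca := by simp only [a]; fun_prop
      cb := by simp only [b]; fun_prop
      cc := by simp only [c]; fun_prop
      a_lb := by
        intro t x
        have h1 : Ei⁻¹ ≤ e (s t) := by
          rw [inv_le_comm₀ hEi (he0 _)]
          exact (le_abs_self _).trans (hEi' _ (hsm t))
        have h2 := hSlb (s t) (X t x)
        simp only [a, G]
        gcongr
      a_ub := fun t x => (le_abs_self _).trans ((a1 t x).trans (by linarith))
      b_bd := fun t x => (b1 t x).trans (by linarith)
      c_bd := fun t x => (c1 t x).trans (by linarith)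
      a_lip := fun t x y => up (a2 t x y) (by linarith)
      b_lip := fun t x y => up (b2 t x y) (by linarith)
      c_lip := fun t x y => up (c2 t x y) (by linarith) }
  refine ⟨S, fun t ht x => ?_⟩
  have hXx : X (τ - t) (e t * x + d t) = x := by
    simp only [X]
    rw [hst t ht]
    have := (he0 t).ne'
    field_simp
    ring
  have hGx : G (τ - t) (e t * x + d t) = Sg t x := by
    simp only [G]; rw [hXx, hst t ht]
  simp only [S, a, b, c]
  rw [hGx, hst t ht]
  exact ⟨rfl, rfl, rfl⟩
end

section
open MeasureTheory Set Filter Topology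

lemma reduction {A B : ℝ → ℝ} {Sg : ℝ → ℝ → ℝ} {τ₀ τ k Cs K lam Cb : ℝ} (hττ : τ₀ < τ)
    (hA : Continuous A) (hB : Continuous B) (hS : Continuous (fun q : ℝ × ℝ => Sg q.1 q.2))
    (hSb : ∀ t x, |Sg t x| ≤ Cs) (hK : 0 ≤ K) (hSl : ∀ t x y, |Sg t x - Sg t y| ≤ K * |x - y|)
    (hlam : 0 < lam) (hSlb : ∀ t x, lam ≤ Sg t x ^ 2) (hk : 0 < k) (hCb : 0 < Cb)
    {φ : ℝ → ℝ} (hφ : Continuous φ) (hφg : ∀ x, |φ x| ≤ Cb * Real.exp (k * |x|)) :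
    ∃ f ft fx fxx : ℝ → ℝ → ℝ,
      ContinuousOn (fun q : ℝ × ℝ => f q.1 q.2) (Icc τ₀ τ ×ˢ univ) ∧
      (∀ x, f τ x = φ x) ∧
      (∃ Kb k' : ℝ, 0 < Kb ∧ 0 < k' ∧ ∀ t ∈ Icc τ₀ τ, ∀ x, |f t x| ≤ Kb * Real.exp (k' * |x|)) ∧
      (∀ t ∈ Ico τ₀ τ, ∀ x, ContinuousAt (fun q : ℝ × ℝ => ft q.1 q.2) (t, x) ∧
        ContinuousAt (fun q : ℝ × ℝ => fx q.1 q.2) (t, x) ∧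
        ContinuousAt (fun q : ℝ × ℝ => fxx q.1 q.2) (t, x) ∧
        HasDerivAt (fun t => f t x) (ft t x) t ∧ HasDerivAt (fun x => f t x) (fx t x) x ∧
        HasDerivAt (fun x => fx t x) (fxx t x) x ∧
        ft t x + (A t + B t * x) * fx t x + 1 / 2 * Sg t x ^ 2 * fxx t x - x * f t x = 0) := by
  obtain ⟨e, d, p, e1, d0, p0, he0, hed, hdd, hpd⟩ := factors hA hB τ
  have he : Continuous e := continuous_iff_continuousAt.2 fun t => (hed t).continuousAt
  have hd : Continuous d := continuous_iff_continuousAt.2 fun t => (hdd t).continuousAt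
  have hp : Continuous p := continuous_iff_continuousAt.2 fun t => (hpd t).continuousAt
  obtain ⟨S, hSc⟩ := exists_coef (k := k) hττ hA he hd hp he0 hS hSb hK hSl hlam hSlb
  have hcosh : ∀ y, 0 < Real.cosh y := Real.cosh_pos
  have hcb : ∀ y, Real.exp |y| ≤ 2 * Real.cosh y := by
    intro y
    have := Real.exp_abs_le y
    rw [Real.cosh_eq]; linarith
  have hm : ∀ y, |φ y / Real.cosh (k * y)| ≤ 2 * Cb := by
    intro y
    rw [abs_div, abs_of_pos (hcosh _), div_le_iff₀ (hcosh _)]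
    have h1 := hcb (k * y)
    rw [abs_mul, abs_of_pos hk] at h1
    have := hφg y
    nlinarith
  obtain ⟨u, ut, ux, uxx, M, hu0, huc, huM, hu⟩ := S.core (T := τ - τ₀ + 1) (by linarith)
    (φ := fun y => φ y / Real.cosh (k * y))
    (hφ.div (by fun_prop) fun y => (hcosh _).ne') hm
  let Y : ℝ → ℝ → ℝ := fun t x => e t * x + d t
  have hY : Continuous (fun q : ℝ × ℝ => Y q.1 q.2) := by simp only [Y]; fun_prop
  let G : ℝ → ℝ → ℝ := fun t x => Real.cosh (k * Y t x) * u (τ - t) (Y t x)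
  let G1 : ℝ → ℝ → ℝ := fun t x => k * Real.sinh (k * Y t x) * u (τ - t) (Y t x)
    + Real.cosh (k * Y t x) * ux (τ - t) (Y t x)
  let G2 : ℝ → ℝ → ℝ := fun t x => k ^ 2 * Real.cosh (k * Y t x) * u (τ - t) (Y t x)
    + 2 * k * Real.sinh (k * Y t x) * ux (τ - t) (Y t x)
    + Real.cosh (k * Y t x) * uxx (τ - t) (Y t x)
  let f : ℝ → ℝ → ℝ := fun t x => Real.exp (p t * x) * G t x
  let fx : ℝ → ℝ → ℝ := fun t x => Real.exp (p t * x) * (p t * G t x + e t * G1 t x)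
  let fxx : ℝ → ℝ → ℝ := fun t x => Real.exp (p t * x) *
    (p t ^ 2 * G t x + 2 * p t * e t * G1 t x + e t ^ 2 * G2 t x)
  let ft : ℝ → ℝ → ℝ := fun t x => Real.exp (p t * x) * ((1 - B t * p t) * x * G t x
    - Real.cosh (k * Y t x) * ut (τ - t) (Y t x) - G1 t x * (e t * (A t + B t * x)))
  have hmap : Continuous (fun q : ℝ × ℝ => (τ - q.1, Y q.1 q.2)) := by fun_prop
  refine ⟨f, ft, fx, fxx, ?_, ?_, ?_, ?_⟩
  · have h1 : ContinuousOn (fun q : ℝ × ℝ => u (τ - q.1) (Y q.1 q.2)) (Icc τ₀ τ ×ˢ univ) := by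
      refine huc.comp (f := fun q : ℝ × ℝ => (τ - q.1, Y q.1 q.2)) hmap.continuousOn ?_
      rintro ⟨t, x⟩ ⟨ht, -⟩
      simp only [mem_Icc] at ht
      exact ⟨⟨by simp only; linarith [ht.2], by simp only; linarith [ht.1]⟩, mem_univ _⟩
    have h2 : Continuous (fun q : ℝ × ℝ => Real.exp (p q.1 * q.2)) := by fun_prop
    have h3 : Continuous (fun q : ℝ × ℝ => Real.cosh (k * Y q.1 q.2)) := by fun_prop
    exact h2.continuousOn.mul (h3.continuousOn.mul h1)
  · intro x
    simp only [f, G, Y, e1, d0, p0, sub_self, hu0]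
    have := (hcosh (k * (1 * x + 0))).ne'
    rw [mul_div_cancel₀ _ this]
    simp
  · obtain ⟨Ee, hEe, hEe'⟩ := exists_bd he τ₀ τ
    obtain ⟨Ed, hEd, hEd'⟩ := exists_bd hd τ₀ τ
    obtain ⟨Ep, hEp, hEp'⟩ := exists_bd hp τ₀ τ
    refine ⟨(|M| + 1) * Real.exp (k * Ed), Ep + k * Ee, by positivity, by positivity,
      fun t ht x => ?_⟩
    have b1 : |u (τ - t) (Y t x)| ≤ |M| + 1 :=
      (huM _ _ (by linarith [ht.2]) (by linarith [ht.1])).trans (by linarith [le_abs_self M])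
    have b2 : Real.cosh (k * Y t x) ≤ Real.exp (k * (Ee * |x| + Ed)) := by
      have hY' : |k * Y t x| ≤ k * (Ee * |x| + Ed) := by
        rw [abs_mul, abs_of_pos hk]
        refine mul_le_mul_of_nonneg_left ((abs_add_le _ _).trans ?_) hk.le
        rw [abs_mul]
        have := hEe' t ht
        have := hEd' t ht
        gcongr
      refine le_trans ?_ (Real.exp_le_exp.2 hY')
      rw [Real.cosh_eq]
      have i1 := Real.exp_le_exp.2 (le_abs_self (k * Y t x))
      have i2 := Real.exp_le_exp.2 (neg_le_abs (k * Y t x))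
      linarith
    have b3 : Real.exp (p t * x) ≤ Real.exp (Ep * |x|) := by
      refine Real.exp_le_exp.2 ((le_abs_self _).trans ?_)
      rw [abs_mul]
      have := hEp' t ht
      gcongr
    simp only [f, G]
    rw [abs_mul, abs_mul, abs_of_pos (Real.exp_pos _), abs_of_pos (hcosh _)]
    calc _ ≤ Real.exp (Ep * |x|) * (Real.exp (k * (Ee * |x| + Ed)) * (|M| + 1)) := by
          gcongr
      _ = (|M| + 1) * Real.exp (k * Ed) * Real.exp ((Ep + k * Ee) * |x|) := by
          rw [mul_assoc (|M| + 1), ← Real.exp_add, ← mul_assoc, ← Real.exp_add, mul_comm]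
          congr 2
          ring
  · intro t ht x
    have t0 : 0 < τ - t := by linarith [ht.2]
    have t1 : τ - t < τ - τ₀ + 1 := by linarith [ht.1]
    obtain ⟨ct, cx, cxx, dt, dx, dxx, pde⟩ := hu (τ - t) (Y t x) t0 t1
    have hcoef := hSc t ⟨ht.1, ht.2.le⟩ x
    have cu : ContinuousAt (fun q : ℝ × ℝ => u q.1 q.2) (τ - t, Y t x) :=
      huc.continuousAt (prod_mem_nhds (Ico_mem_nhds t0 t1) univ_mem)
    have lift : ∀ {v : ℝ → ℝ → ℝ}, ContinuousAt (fun q : ℝ × ℝ => v q.1 q.2) (τ - t, Y t x) →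
        ContinuousAt (fun q : ℝ × ℝ => v (τ - q.1) (Y q.1 q.2)) (t, x) := by
      intro v hv
      exact ContinuousAt.comp (f := fun q : ℝ × ℝ => (τ - q.1, Y q.1 q.2)) (x := (t, x))
        hv hmap.continuousAt
    replace ct := lift ct
    replace cx := lift cx
    replace cxx := lift cxx
    replace cu := lift cu
    have cY : ContinuousAt (fun q : ℝ × ℝ => Y q.1 q.2) (t, x) := hY.continuousAt
    have cch : ContinuousAt (fun q : ℝ × ℝ => Real.cosh (k * Y q.1 q.2)) (t, x) := by
      have : Continuous (fun q : ℝ × ℝ => Real.cosh (k * Y q.1 q.2)) := by fun_prop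
      exact this.continuousAt
    have csh : ContinuousAt (fun q : ℝ × ℝ => Real.sinh (k * Y q.1 q.2)) (t, x) := by
      have : Continuous (fun q : ℝ × ℝ => Real.sinh (k * Y q.1 q.2)) := by fun_prop
      exact this.continuousAt
    have cG : ContinuousAt (fun q : ℝ × ℝ => G q.1 q.2) (t, x) := cch.mul cu
    have cG1 : ContinuousAt (fun q : ℝ × ℝ => G1 q.1 q.2) (t, x) :=
      ((continuousAt_const.mul csh).mul cu).add (cch.mul cx)
    have cG2 : ContinuousAt (fun q : ℝ × ℝ => G2 q.1 q.2) (t, x) :=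
      (((continuousAt_const.mul cch).mul cu).add ((continuousAt_const.mul csh).mul cx)).add
        (cch.mul cxx)
    have cc : ∀ {g : ℝ × ℝ → ℝ}, Continuous g → ContinuousAt g (t, x) := fun h => h.continuousAt
    have cex : ContinuousAt (fun q : ℝ × ℝ => Real.exp (p q.1 * q.2)) (t, x) :=
      cc (by fun_prop)
    -- space derivatives of the building blocks
    have dY : HasDerivAt (fun x => Y t x) (e t) x := by
      exact (((hasDerivAt_id x).const_mul (e t)).add_const (d t)).congr_deriv (by ring)
    have dch : HasDerivAt (fun x => Real.cosh (k * Y t x)) (Real.sinh (k * Y t x) * (k * e t)) x :=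
      (dY.const_mul k).cosh
    have dsh : HasDerivAt (fun x => Real.sinh (k * Y t x)) (Real.cosh (k * Y t x) * (k * e t)) x :=
      (dY.const_mul k).sinh
    have du : HasDerivAt (fun x => u (τ - t) (Y t x)) (ux (τ - t) (Y t x) * e t) x :=
      HasDerivAt.comp x dx dY
    have dux : HasDerivAt (fun x => ux (τ - t) (Y t x)) (uxx (τ - t) (Y t x) * e t) x :=
      HasDerivAt.comp x dxx dY
    have dex : HasDerivAt (fun x => Real.exp (p t * x)) (Real.exp (p t * x) * p t) x := by
      simpa using ((hasDerivAt_id x).const_mul (p t)).exp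
    have dG : HasDerivAt (fun x => G t x) (e t * G1 t x) x := by
      refine (dch.mul du).congr_deriv ?_
      simp only [G1]; ring
    have dG1 : HasDerivAt (fun x => G1 t x) (e t * G2 t x) x := by
      refine (((dsh.const_mul k).mul du).add (dch.mul dux)).congr_deriv ?_
      simp only [G2]; ring
    refine ⟨?_, ?_, ?_, ?_, ?_, ?_, ?_⟩
    · have h1 : ContinuousAt (fun q : ℝ × ℝ => (1 - B q.1 * p q.1) * q.2) (t, x) :=
        cc (by fun_prop)
      have h2 : ContinuousAt (fun q : ℝ × ℝ => e q.1 * (A q.1 + B q.1 * q.2)) (t, x) :=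
        cc (by fun_prop)
      exact cex.mul (((h1.mul cG).sub (cch.mul ct)).sub (cG1.mul h2))
    · have h1 : ContinuousAt (fun q : ℝ × ℝ => p q.1) (t, x) := cc (by fun_prop)
      have h2 : ContinuousAt (fun q : ℝ × ℝ => e q.1) (t, x) := cc (by fun_prop)
      exact cex.mul ((h1.mul cG).add (h2.mul cG1))
    · have h1 : ContinuousAt (fun q : ℝ × ℝ => p q.1 ^ 2) (t, x) := cc (by fun_prop)
      have h2 : ContinuousAt (fun q : ℝ × ℝ => 2 * p q.1 * e q.1) (t, x) := cc (by fun_prop)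
      have h3 : ContinuousAt (fun q : ℝ × ℝ => e q.1 ^ 2) (t, x) := cc (by fun_prop)
      exact cex.mul (((h1.mul cG).add (h2.mul cG1)).add (h3.mul cG2))
    · have hYt : HasDerivAt (fun t => Y t x) (-(e t * (A t + B t * x))) t :=
        (((hed t).mul_const x).add (hdd t)).congr_deriv (by ring)
      have hgt : HasDerivAt (fun t => τ - t) (-1) t := by
        simpa using (hasDerivAt_id t).const_sub τ
      have dut := chain2 (u := u) (ut := ut) (ux := ux) (T := τ - τ₀ + 1)
        (fun t x h0 h1 => by
          obtain ⟨a1, a2, a3, a4, a5, a6, a7⟩ := hu t x h0 h1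
          exact ⟨a1, a2, a4, a5⟩) hgt hYt t0 t1
      have dcht := (hYt.const_mul k).cosh
      have dext := ((hpd t).mul_const x).exp
      refine (dext.mul (dcht.mul dut)).congr_deriv ?_
      simp only [ft, G, G1, Pi.mul_apply]; ring
    · refine (dex.mul dG).congr_deriv ?_
      simp only [fx]; ring
    · refine (dex.mul ((dG.const_mul (p t)).add (dG1.const_mul (e t)))).congr_deriv ?_
      simp only [fxx, Pi.add_apply]; ring
    · obtain ⟨ha, hb, hc⟩ := hcoef
      simp only [ft, fx, fxx, f]
      have key : Real.cosh (k * Y t x) * ut (τ - t) (Y t x) =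
          A t * p t * G t x + 1 / 2 * Sg t x ^ 2 *
            (p t ^ 2 * G t x + 2 * p t * e t * G1 t x + e t ^ 2 * G2 t x) := by
        rw [pde]
        simp only [Y] at ha hb hc ⊢
        rw [ha, hb, hc]
        simp only [G, G1, G2, Y]
        have hne := (hcosh (k * (e t * x + d t))).ne'
        rw [Real.tanh_eq_sinh_div_cosh]
        field_simp
        ring
      rw [key]
      ring
end

/-- Existence of a solution, with exponential growth, to the backward pricing PDE
`∂ₜf + (α(t)+β(t)x)∂ₓf + ½σ(t,x)²∂²ₓₓf − x·f = 0` with terminal datum `φ` of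
exponential growth. -/
theorem existence_pricing_pde_exponential_growth
    (τ₀ τ : ℝ) (hττ : τ₀ < τ)
    (α β : ℝ → ℝ)
    (hα : ∃ K : NNReal, LipschitzOnWith K α (Set.Icc τ₀ τ))
    (hβ : ∃ K : NNReal, LipschitzOnWith K β (Set.Icc τ₀ τ))
    (σ : ℝ → ℝ → ℝ)
    (hσbdd : ∃ Cσ : ℝ, ∀ t ∈ Set.Icc τ₀ τ, ∀ x : ℝ, |σ t x| ≤ Cσ)
    (hσlip : ∃ K : NNReal,
      LipschitzOnWith K (fun p : ℝ × ℝ => σ p.1 p.2) (Set.Icc τ₀ τ ×ˢ (Set.univ : Set ℝ)))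
    (lam₀ : ℝ) (hlam₀ : 0 < lam₀)
    (hσlb : ∀ t ∈ Set.Icc τ₀ τ, ∀ x : ℝ, lam₀ ≤ (σ t x) ^ 2)
    (φ : ℝ → ℝ) (hφ : Continuous φ)
    (Cbar cbar : ℝ) (hCbar : 0 < Cbar) (hcbar : 0 < cbar)
    (hφg : ∀ x : ℝ, |φ x| ≤ Cbar * Real.exp (cbar * |x|)) :
    ∃ f : ℝ → ℝ → ℝ,
      ContinuousOn (fun p : ℝ × ℝ => f p.1 p.2) (Set.Icc τ₀ τ ×ˢ (Set.univ : Set ℝ)) ∧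
      C12On f (Set.Ico τ₀ τ) ∧
      (∀ t ∈ Set.Ico τ₀ τ, ∀ x : ℝ,
        deriv (fun s => f s x) t + (α t + β t * x) * deriv (fun y => f t y) x
          + (1 / 2) * (σ t x) ^ 2 * deriv (deriv (fun y => f t y)) x - x * f t x = 0) ∧
      (∀ x : ℝ, f τ x = φ x) ∧
      ∃ Kbar k : ℝ, 0 < Kbar ∧ 0 < k ∧
        ∀ t ∈ Set.Icc τ₀ τ, ∀ x : ℝ, |f t x| ≤ Kbar * Real.exp (k * |x|) := by
  obtain ⟨Kα, hα⟩ := hα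
  obtain ⟨Kβ, hβ⟩ := hβ
  obtain ⟨Cσ, hσbdd⟩ := hσbdd
  obtain ⟨Kσ, hσlip⟩ := hσlip
  have hclc : Continuous (fun t : ℝ => max τ₀ (min τ t)) := by fun_prop
  have hclm : ∀ t : ℝ, max τ₀ (min τ t) ∈ Set.Icc τ₀ τ := fun t =>
    ⟨le_max_left _ _, max_le hττ.le (min_le_left _ _)⟩
  have hcle : ∀ t ∈ Set.Icc τ₀ τ, max τ₀ (min τ t) = t := by
    intro t ht
    rw [min_eq_right ht.2, max_eq_right ht.1]
  have hA : Continuous (fun t => α (max τ₀ (min τ t))) :=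
    hα.continuousOn.comp_continuous hclc hclm
  have hB : Continuous (fun t => β (max τ₀ (min τ t))) :=
    hβ.continuousOn.comp_continuous hclc hclm
  have hS : Continuous (fun q : ℝ × ℝ => σ (max τ₀ (min τ q.1)) q.2) :=
    hσlip.continuousOn.comp_continuous
      (f := fun q : ℝ × ℝ => (max τ₀ (min τ q.1), q.2)) (by fun_prop)
      (fun q => ⟨hclm q.1, Set.mem_univ _⟩)
  obtain ⟨f, ft, fx, fxx, hc, hter, hgr, hder⟩ := reduction (τ₀ := τ₀) (τ := τ) (k := cbar)
    (Cs := Cσ) (K := Kσ) (lam := lam₀) (Cb := Cbar)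
    (Sg := fun t x => σ (max τ₀ (min τ t)) x) hττ hA hB hS
    (fun t x => hσbdd _ (hclm t) x) Kσ.coe_nonneg
    (fun t x y => by
      have h := hσlip.dist_le_mul (max τ₀ (min τ t), x) ⟨hclm t, Set.mem_univ _⟩
        (max τ₀ (min τ t), y) ⟨hclm t, Set.mem_univ _⟩
      rw [Prod.dist_eq, dist_self, max_eq_right dist_nonneg] at h
      simpa [Real.dist_eq] using h)
    hlam₀ (fun t x => hσlb _ (hclm t) x) hcbar hCbar hφ hφg
  have dt : ∀ t ∈ Set.Ico τ₀ τ, ∀ x, deriv (fun s => f s x) t = ft t x :=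
    fun t ht x => (hder t ht x).2.2.2.1.deriv
  have dx : ∀ t ∈ Set.Ico τ₀ τ, deriv (fun x => f t x) = fx t :=
    fun t ht => funext fun x => (hder t ht x).2.2.2.2.1.deriv
  have dxx : ∀ t ∈ Set.Ico τ₀ τ, deriv (fx t) = fxx t :=
    fun t ht => funext fun x => (hder t ht x).2.2.2.2.2.1.deriv
  refine ⟨f, hc, ⟨?_, ?_, ?_, ?_, ?_, ?_⟩, ?_, hter, hgr⟩
  · exact hc.mono (Set.prod_mono Set.Ico_subset_Icc_self subset_rfl)
  · exact fun x t ht => (hder t ht x).2.2.2.1.differentiableAt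
  · intro t ht
    have hcx : Continuous (fxx t) := by
      rw [continuous_iff_continuousAt]
      intro x
      exact ContinuousAt.comp (g := fun q : ℝ × ℝ => fxx q.1 q.2) (f := fun x : ℝ => (t, x))
        (hder t ht x).2.2.1 (Continuous.continuousAt (by fun_prop))
    have h1 : ContDiff ℝ 1 (fx t) := by
      rw [contDiff_one_iff_deriv]
      refine ⟨fun x => (hder t ht x).2.2.2.2.2.1.differentiableAt, ?_⟩
      rw [dxx t ht]
      exact hcx
    have h2 : ContDiff ℝ (1 + 1) (fun x => f t x) := by
      rw [contDiff_succ_iff_deriv]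
      refine ⟨fun x => (hder t ht x).2.2.2.2.1.differentiableAt, by simp, ?_⟩
      rw [dx t ht]
      exact h1
    exact (one_add_one_eq_two (R := WithTop ℕ∞)) ▸ h2
  · have h : ContinuousOn (fun q : ℝ × ℝ => ft q.1 q.2) (Set.Ico τ₀ τ ×ˢ Set.univ) :=
      fun q hq => (hder q.1 hq.1 q.2).1.continuousWithinAt
    exact h.congr fun q hq => dt q.1 hq.1 q.2
  · have h : ContinuousOn (fun q : ℝ × ℝ => fx q.1 q.2) (Set.Ico τ₀ τ ×ˢ Set.univ) :=
      fun q hq => (hder q.1 hq.1 q.2).2.1.continuousWithinAt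
    exact h.congr fun q hq => congrFun (dx q.1 hq.1) q.2
  · have h : ContinuousOn (fun q : ℝ × ℝ => fxx q.1 q.2) (Set.Ico τ₀ τ ×ˢ Set.univ) :=
      fun q hq => (hder q.1 hq.1 q.2).2.2.1.continuousWithinAt
    refine h.congr fun q hq => ?_
    simp only [dx q.1 hq.1, dxx q.1 hq.1]
  · intro t ht x
    have h := (hder t ht x).2.2.2.2.2.2
    simp only [hcle t ⟨ht.1, ht.2.le⟩] at h
    rw [dt t ht x, dx t ht, dxx t ht]
    exact h
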